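/- arXiv:1106.4583 — 9 statements merged into one kernel-verified Lean document; each statement's English description precedes it below -/
import Mathlib

section
/- Let Φ : ℝ² → ℝ be a smooth function, let (τ₀, ν₀) ∈ ℝ² and θ₀ ∈ ℝ. Then there exists a unique continuously differentiable function (τ, ν, θ) : ℝ → ℝ³, defined on all of ℝ, satisfying τ'(s) = 1 + ν(s)·Φ(τ(s), ν(s)), ν'(s) = −τ(s)·Φ(τ(s), ν(s)), θ'(s) = Φ(τ(s), ν(s)) for all s ∈ ℝ, with initial values τ(0) = τ₀, ν(0) = ν₀, θ(0) = θ₀. (In particular, no solution of this system blows up in finite time.) -/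
/-!
Write `z = τ + iν`. The first two equations form the autonomous planar system
`z' = 1 - iΦ(z)z`, and `θ` is then recovered by integrating `Φ(z)`.
The rotational term `-iΦ(z)z` is orthogonal to `z`, so `⟪z, z'⟫ = Re z`: the radial growth of `z` is
bounded independently of `Φ`. The field may therefore be cut off outside a large ball without
spoiling this bound; the truncated field is complete, and over a prescribed time interval its
integral curve never leaves the region where the two fields agree.
-/

open Set Metric Complex
open scoped Manifold RealInnerProductSpace

section IntegralCurve

variable {E : Type*} [NormedAddCommGroup E] [NormedSpace ℝ E]
  {v : E → E} {γ γ' : ℝ → E} {s : Set ℝ} {t₀ : ℝ}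

lemma isMIntegralCurveOn_iff_isIntegralCurveOn :
    IsMIntegralCurveOn (I := 𝓘(ℝ, E)) γ v s ↔ IsIntegralCurveOn γ (fun _ ↦ v) s :=
  forall₂_congr fun _ _ ↦ hasMFDerivWithinAt_iff_hasFDerivWithinAt

lemma isMIntegralCurve_iff_isIntegralCurve :
    IsMIntegralCurve (I := 𝓘(ℝ, E)) γ v ↔ IsIntegralCurve γ (fun _ ↦ v) :=
  forall_congr' fun _ ↦ hasMFDerivAt_iff_hasFDerivAt

theorem isIntegralCurve_eq_of_contDiff (hv : ContDiff ℝ 1 v)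
    (hγ : IsIntegralCurve γ fun _ ↦ v) (hγ' : IsIntegralCurve γ' fun _ ↦ v)
    (h : γ t₀ = γ' t₀) : γ = γ' :=
  isMIntegralCurve_Ioo_eq_of_contMDiff_boundaryless (I := 𝓘(ℝ, E))
    (contMDiff_vectorSpace_iff_contDiff.2 hv)
    (isMIntegralCurve_iff_isIntegralCurve.2 hγ) (isMIntegralCurve_iff_isIntegralCurve.2 hγ') h

theorem exists_isIntegralCurve_iff_exists_isIntegralCurveOn_Ioo (hv : ContDiff ℝ 1 v) (x₀ : E) :
    (∃ γ, γ 0 = x₀ ∧ IsIntegralCurve γ fun _ ↦ v) ↔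
      ∀ a, ∃ γ, γ 0 = x₀ ∧ IsIntegralCurveOn γ (fun _ ↦ v) (Ioo (-a) a) := by
  simpa only [isMIntegralCurve_iff_isIntegralCurve, isMIntegralCurveOn_iff_isIntegralCurveOn] using
    exists_isMIntegralCurve_iff_exists_isMIntegralCurveOn_Ioo (I := 𝓘(ℝ, E))
      (contMDiff_vectorSpace_iff_contDiff.2 hv) x₀

theorem exists_isIntegralCurve_of_hasCompactSupport [CompleteSpace E] (hv : ContDiff ℝ 1 v)
    (hsupp : HasCompactSupport v) (x₀ : E) : ∃ γ, γ 0 = x₀ ∧ IsIntegralCurve γ fun _ ↦ v := by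
  refine (exists_isIntegralCurve_iff_exists_isIntegralCurveOn_Ioo hv x₀).2 fun a ↦ ?_
  obtain ⟨K, hK⟩ := hv.lipschitzWith_of_hasCompactSupport hsupp one_ne_zero
  obtain ⟨L, hL⟩ := hsupp.exists_bound_of_continuous hv.continuous
  have hpl : IsPicardLindelof (fun _ ↦ v) (⟨0, by simp⟩ : Icc (-|a|) |a|) x₀
      (L.toNNReal * |a|.toNNReal) 0 L.toNNReal K :=
    .of_time_independent (fun x _ ↦ (hL x).trans (Real.le_coe_toNNReal L)) hK.lipschitzOnWith
      (by simp)
  obtain ⟨γ, hγ₀, hγ⟩ := hpl.exists_eq_forall_mem_Icc_hasDerivWithinAt₀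
  have hsub : Ioo (-a) a ⊆ Icc (-|a|) |a| :=
    Ioo_subset_Icc_self.trans (Icc_subset_Icc (neg_le_neg (le_abs_self a)) (le_abs_self a))
  exact ⟨γ, hγ₀, IsIntegralCurveOn.mono hγ hsub⟩

end IntegralCurve

section RadialGrowth

variable {E : Type*} [NormedAddCommGroup E] [InnerProductSpace ℝ E]

theorem one_add_norm_sq_le_mul_exp_of_abs_inner_le {γ γ' : ℝ → E} {C : ℝ}
    (hγ : ∀ t, HasDerivAt γ (γ' t) t) (hC : ∀ t, |⟪γ t, γ' t⟫| ≤ C * (1 + ‖γ t‖ ^ 2)) (t₀ t : ℝ) :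
    1 + ‖γ t‖ ^ 2 ≤ (1 + ‖γ t₀‖ ^ 2) * Real.exp (2 * C * |t - t₀|) := by
  have hpos (s : ℝ) : 0 < 1 + ‖γ s‖ ^ 2 := by positivity
  have hderiv (s : ℝ) : HasDerivAt (fun r ↦ Real.log (1 + ‖γ r‖ ^ 2))
      (2 * ⟪γ s, γ' s⟫ / (1 + ‖γ s‖ ^ 2)) s :=
    ((hγ s).norm_sq.const_add 1).log (hpos s).ne'
  have hbound (s : ℝ) : ‖2 * ⟪γ s, γ' s⟫ / (1 + ‖γ s‖ ^ 2)‖ ≤ 2 * C := by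
    rw [Real.norm_eq_abs, abs_div, abs_of_pos (hpos s), div_le_iff₀ (hpos s), abs_mul, abs_two,
      mul_assoc]
    gcongr
    exact hC s
  have hlog := (le_abs_self _).trans <| convex_univ.norm_image_sub_le_of_norm_hasDerivWithin_le
    (fun s _ ↦ (hderiv s).hasDerivWithinAt) (fun s _ ↦ hbound s) (mem_univ t₀) (mem_univ t)
  rw [← Real.log_le_log_iff (hpos t) (by positivity), Real.log_mul (hpos t₀).ne' (by positivity),
    Real.log_exp]
  exact sub_le_iff_le_add'.1 hlog

theorem existsUnique_isIntegralCurve_of_abs_inner_le [FiniteDimensional ℝ E] {v : E → E} {C : ℝ}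
    (hv : ContDiff ℝ 1 v) (hC : ∀ x, |⟪x, v x⟫| ≤ C * (1 + ‖x‖ ^ 2)) (x₀ : E) :
    ∃! γ, γ 0 = x₀ ∧ IsIntegralCurve γ fun _ ↦ v := by
  refine existsUnique_of_exists_of_unique ?_ fun γ₁ γ₂ h₁ h₂ ↦
    isIntegralCurve_eq_of_contDiff hv h₁.2 h₂.2 (h₁.1.trans h₂.1.symm)
  refine (exists_isIntegralCurve_iff_exists_isIntegralCurveOn_Ioo hv x₀).2 fun a ↦ ?_
  have hC₀ : 0 ≤ C := by simpa using (abs_nonneg _).trans (hC 0)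
  let R : ℝ := (1 + ‖x₀‖ ^ 2) * Real.exp (2 * C * a)
  have hR : 0 < R := by positivity
  let χ : ContDiffBump (0 : E) := ⟨R, R + 1, hR, lt_add_one R⟩
  obtain ⟨γ, hγ₀, hγ⟩ := exists_isIntegralCurve_of_hasCompactSupport (v := fun x ↦ χ x • v x)
    (χ.contDiff.smul hv) χ.hasCompactSupport.smul_right x₀
  have hCχ (x : E) : |⟪x, χ x • v x⟫| ≤ C * (1 + ‖x‖ ^ 2) := by
    rw [real_inner_smul_right, abs_mul, abs_of_nonneg χ.nonneg]
    exact (mul_le_of_le_one_left (abs_nonneg _) χ.le_one).trans (hC x)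
  have hnorm (t : ℝ) (ht : t ∈ Ioo (-a) a) : ‖γ t‖ ≤ R := calc
    ‖γ t‖ ≤ 1 + ‖γ t‖ ^ 2 := by nlinarith [sq_nonneg (‖γ t‖ - 1)]
    _ ≤ (1 + ‖γ 0‖ ^ 2) * Real.exp (2 * C * |t - 0|) :=
      one_add_norm_sq_le_mul_exp_of_abs_inner_le hγ (fun s ↦ hCχ (γ s)) 0 t
    _ ≤ (1 + ‖x₀‖ ^ 2) * Real.exp (2 * C * a) := by
      rw [hγ₀, sub_zero]
      gcongr
      exact (abs_lt.2 ht).le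
  refine ⟨γ, hγ₀, fun t ht ↦ ?_⟩
  have hχ : χ (γ t) = 1 := χ.one_of_mem_closedBall (mem_closedBall_zero_iff.2 (hnorm t ht))
  simpa only [hχ, one_smul] using (hγ t).hasDerivWithinAt

end RadialGrowth

theorem existsUnique_hasDerivAt_of_continuous {E : Type*} [NormedAddCommGroup E] [NormedSpace ℝ E]
    [CompleteSpace E] {g : ℝ → E} (hg : Continuous g) (t₀ : ℝ) (x₀ : E) :
    ∃! F : ℝ → E, (∀ t, HasDerivAt F (g t) t) ∧ F t₀ = x₀ := by
  refine ⟨fun t ↦ x₀ + ∫ r in t₀..t, g r, ⟨fun t ↦ ?_, by simp⟩, fun F ⟨hF, hF₀⟩ ↦ ?_⟩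
  · exact (hg.integral_hasStrictDerivAt t₀ t).hasDerivAt.const_add x₀
  · funext t
    rw [intervalIntegral.integral_eq_sub_of_hasDerivAt (fun r _ ↦ hF r) (hg.intervalIntegrable _ _),
      hF₀, add_sub_cancel]

lemma hasDerivAt_complex_iff {z : ℝ → ℂ} {z' : ℂ} {t : ℝ} :
    HasDerivAt z z' t ↔
      HasDerivAt (fun s ↦ (z s).re) z'.re t ∧ HasDerivAt (fun s ↦ (z s).im) z'.im t := by
  refine ⟨fun h ↦ ⟨reCLM.hasFDerivAt.comp_hasDerivAt t h, imCLM.hasFDerivAt.comp_hasDerivAt t h⟩,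
    fun ⟨hre, him⟩ ↦ ?_⟩
  exact equivRealProdCLM.symm.hasFDerivAt.comp_hasDerivAt t (hre.prodMk him)

/-- The planar vector field `z ↦ 1 - iΦ(z)z` on `ℂ ≃ ℝ²`, whose integral curves `z = τ + iν` are the
tangential and normal coordinates `τ = ⟨X, T⟩`, `ν = ⟨X, N⟩` of an arc-length parametrized curve `X`
with signed curvature `Φ(τ, ν)`. -/
noncomputable def prescribedCurvatureField (Φ : ℝ × ℝ → ℝ) (z : ℂ) : ℂ :=
  1 - I * Φ (z.re, z.im) * z

section PrescribedCurvatureField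

variable {Φ : ℝ × ℝ → ℝ}

lemma prescribedCurvatureField_re (z : ℂ) :
    (prescribedCurvatureField Φ z).re = 1 + z.im * Φ (z.re, z.im) := by
  simp [prescribedCurvatureField, mul_comm]

lemma prescribedCurvatureField_im (z : ℂ) :
    (prescribedCurvatureField Φ z).im = -z.re * Φ (z.re, z.im) := by
  simp [prescribedCurvatureField, mul_comm]

lemma inner_prescribedCurvatureField (z : ℂ) : ⟪z, prescribedCurvatureField Φ z⟫ = z.re := by
  simp only [Complex.inner, mul_re, conj_re, conj_im, prescribedCurvatureField_re,
    prescribedCurvatureField_im]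
  ring

lemma abs_inner_prescribedCurvatureField_le (z : ℂ) :
    |⟪z, prescribedCurvatureField Φ z⟫| ≤ 1 + ‖z‖ ^ 2 := by
  rw [inner_prescribedCurvatureField]
  nlinarith [abs_re_le_norm z, sq_nonneg (‖z‖ - 1)]

lemma contDiff_prescribedCurvatureField {n : WithTop ℕ∞} (hΦ : ContDiff ℝ n Φ) :
    ContDiff ℝ n (prescribedCurvatureField Φ) := by
  have hΦz : ContDiff ℝ n fun z : ℂ ↦ (Φ (z.re, z.im) : ℂ) :=
    ofRealCLM.contDiff.comp (hΦ.comp (reCLM.contDiff.prodMk imCLM.contDiff))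
  exact contDiff_const.sub ((contDiff_const.mul hΦz).mul contDiff_id)

lemma isIntegralCurve_prescribedCurvatureField_iff {z : ℝ → ℂ} :
    IsIntegralCurve z (fun _ ↦ prescribedCurvatureField Φ) ↔
      (∀ s, HasDerivAt (fun t ↦ (z t).re) (1 + (z s).im * Φ ((z s).re, (z s).im)) s) ∧
      ∀ s, HasDerivAt (fun t ↦ (z t).im) (-(z s).re * Φ ((z s).re, (z s).im)) s := by
  simp only [IsIntegralCurve, hasDerivAt_complex_iff, prescribedCurvatureField_re,
    prescribedCurvatureField_im, forall_and]

end PrescribedCurvatureField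

theorem helicoidal_prescribed_curvature_ode_existence_uniqueness_general
    (Φ : ℝ × ℝ → ℝ) (hΦ : ContDiff ℝ 1 Φ) (τ₀ ν₀ θ₀ : ℝ) :
    ∃! f : ℝ → ℝ × ℝ × ℝ,
      (∀ s : ℝ, HasDerivAt (fun t => (f t).1)
          (1 + (f s).2.1 * Φ ((f s).1, (f s).2.1)) s) ∧
      (∀ s : ℝ, HasDerivAt (fun t => (f t).2.1)
          (-(f s).1 * Φ ((f s).1, (f s).2.1)) s) ∧
      (∀ s : ℝ, HasDerivAt (fun t => (f t).2.2)
          (Φ ((f s).1, (f s).2.1)) s) ∧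
      f 0 = (τ₀, ν₀, θ₀) := by
  have hgrowth (w : ℂ) : |⟪w, prescribedCurvatureField Φ w⟫| ≤ 1 * (1 + ‖w‖ ^ 2) :=
    (abs_inner_prescribedCurvatureField_le w).trans_eq (one_mul _).symm
  obtain ⟨z, ⟨hz₀, hz⟩, hz_unique⟩ := existsUnique_isIntegralCurve_of_abs_inner_le
    (contDiff_prescribedCurvatureField hΦ) hgrowth ⟨τ₀, ν₀⟩
  have hcurvature : Continuous fun s ↦ Φ ((z s).re, (z s).im) :=
    hΦ.continuous.comp (equivRealProdCLM.continuous.comp hz.continuous)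
  obtain ⟨θ, ⟨hθ, hθ₀⟩, hθ_unique⟩ := existsUnique_hasDerivAt_of_continuous hcurvature 0 θ₀
  obtain ⟨hτ, hν⟩ := isIntegralCurve_prescribedCurvatureField_iff.1 hz
  refine ⟨fun s ↦ ((z s).re, (z s).im, θ s), ⟨hτ, hν, hθ, by simp [hz₀, hθ₀]⟩, ?_⟩
  rintro g ⟨hg_τ, hg_ν, hg_θ, hg₀⟩
  obtain rfl : (fun s ↦ ⟨(g s).1, (g s).2.1⟩ : ℝ → ℂ) = z :=
    hz_unique _ ⟨by simp [hg₀], isIntegralCurve_prescribedCurvatureField_iff.2 ⟨hg_τ, hg_ν⟩⟩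
  obtain rfl : (fun s ↦ (g s).2.2) = θ := hθ_unique _ ⟨hg_θ, by simp [hg₀]⟩
  rfl

/-- Lemma 3.2, ODE form.
For every smooth function `Φ : ℝ² → ℝ` and initial values `(τ₀, ν₀, θ₀)`, there is a
unique continuously differentiable solution `(τ, ν, θ) : ℝ → ℝ³`, defined on all of `ℝ`,
of the system `τ' = 1 + ν·Φ(τ,ν)`, `ν' = −τ·Φ(τ,ν)`, `θ' = Φ(τ,ν)` with
`τ(0) = τ₀`, `ν(0) = ν₀`, `θ(0) = θ₀`. -/
theorem helicoidal_prescribed_curvature_ode_existence_uniqueness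
    (Φ : ℝ × ℝ → ℝ) (hΦ : ContDiff ℝ (⊤ : ℕ∞) Φ) (τ₀ ν₀ θ₀ : ℝ) :
    ∃! f : ℝ → ℝ × ℝ × ℝ,
      (∀ s : ℝ, HasDerivAt (fun t => (f t).1)
          (1 + (f s).2.1 * Φ ((f s).1, (f s).2.1)) s) ∧
      (∀ s : ℝ, HasDerivAt (fun t => (f t).2.1)
          (-(f s).1 * Φ ((f s).1, (f s).2.1)) s) ∧
      (∀ s : ℝ, HasDerivAt (fun t => (f t).2.2)
          (Φ ((f s).1, (f s).2.1)) s) ∧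
      f 0 = (τ₀, ν₀, θ₀) :=
  helicoidal_prescribed_curvature_ode_existence_uniqueness_general Φ
    (hΦ.of_le (by exact_mod_cast le_top)) τ₀ ν₀ θ₀
end

section
/- For every s ∈ ℝ with τ(s) ≠ 0, the derivative of the quotient ν/τ at s equals −(τ(s)⁵ + τ(s)³ν(s)² + h²τ(s)³ + h²τ(s)ν(s)² + h²ν(s))/(τ(s)²(τ(s)² + ν(s)² + h²)). Consequently, at every s where τ(s) > 0 and ν(s) > 0, the function ν/τ has strictly negative derivative. -/
open Filter Topology

/- Context: `h > 0`; `τ, ν : ℝ → ℝ` solve the ODE system of the generating curve of a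
helicoidal surface of pitch `h` rotating with unit angular speed under mean curvature flow:
`τ' = ((τ² + h²)/(τ² + ν² + h²))(1 + τν)`, `ν' = (τν − τ²(τ² + h²))/(τ² + ν² + h²)`,
with `r = √(τ² + ν²)` and signed curvature `k = (τ(τ² + h²) − ν)/(r² + h²)`. -/

/- The two terms `±a²b` cancel, and the survivors `a(a² + h²)(a² + b²) + h²b` all carry the same
sign on the first quadrant. -/
theorem helicoidal_wronskian_eq {R : Type*} [CommRing R] (a b h : R) :
    (a * b - a ^ 2 * (a ^ 2 + h ^ 2)) * a - b * ((a ^ 2 + h ^ 2) * (1 + a * b)) =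
      -(a ^ 5 + a ^ 3 * b ^ 2 + h ^ 2 * a ^ 3 + h ^ 2 * a * b ^ 2 + h ^ 2 * b) := by
  ring

theorem helicoidal_ratio_slope_neg {K : Type*} [Field K] [LinearOrder K] [IsStrictOrderedRing K]
    {a b : K} (h : K) (ha : 0 < a) (hb : 0 ≤ b) :
    -(a ^ 5 + a ^ 3 * b ^ 2 + h ^ 2 * a ^ 3 + h ^ 2 * a * b ^ 2 + h ^ 2 * b)
      / (a ^ 2 * (a ^ 2 + b ^ 2 + h ^ 2)) < 0 :=
  div_neg_of_neg_of_pos (neg_neg_of_pos (by positivity)) (by positivity)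

section Derivative

variable {𝕜 : Type*} [NontriviallyNormedField 𝕜] {f g : 𝕜 → 𝕜} {s : 𝕜}

theorem hasDerivAt_div_of_common_denominator {p q d : 𝕜} (hf : HasDerivAt f (p / d) s)
    (hg : HasDerivAt g (q / d) s) (hgs : g s ≠ 0) :
    HasDerivAt (fun t => f t / g t) ((p * g s - f s * q) / (g s ^ 2 * d)) s := by
  refine (hf.fun_div hg hgs).congr_deriv ?_
  calc (p / d * g s - f s * (q / d)) / g s ^ 2
      = (p * g s - f s * q) / d / g s ^ 2 := by ring
    _ = (p * g s - f s * q) / (g s ^ 2 * d) := by rw [div_div, mul_comm d]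

theorem hasDerivAt_helicoidal_ratio {τ ν : 𝕜 → 𝕜} {h : 𝕜}
    (hτ : HasDerivAt τ
      ((τ s ^ 2 + h ^ 2) / (τ s ^ 2 + ν s ^ 2 + h ^ 2) * (1 + τ s * ν s)) s)
    (hν : HasDerivAt ν
      ((τ s * ν s - τ s ^ 2 * (τ s ^ 2 + h ^ 2)) / (τ s ^ 2 + ν s ^ 2 + h ^ 2)) s)
    (hs : τ s ≠ 0) :
    HasDerivAt (fun t => ν t / τ t)
      (-(τ s ^ 5 + τ s ^ 3 * ν s ^ 2 + h ^ 2 * τ s ^ 3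
          + h ^ 2 * τ s * ν s ^ 2 + h ^ 2 * ν s)
        / (τ s ^ 2 * (τ s ^ 2 + ν s ^ 2 + h ^ 2))) s := by
  rw [div_mul_eq_mul_div] at hτ
  rw [← helicoidal_wronskian_eq]
  exact hasDerivAt_div_of_common_denominator hν hτ hs

end Derivative

/-- Lemma 4.2. Wherever `τ ≠ 0`, the quotient `ν/τ` has derivative
`−(τ⁵ + τ³ν² + h²τ³ + h²τν² + h²ν)/(τ²(τ² + ν² + h²))`; in particular `ν/τ` has
strictly negative derivative wherever `τ > 0` and `ν > 0`. -/
theorem ratio_nu_tau_decreasing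
    (h : ℝ) (hh : 0 < h) (τ ν : ℝ → ℝ)
    (hτ : ∀ s : ℝ, HasDerivAt τ
      ((τ s ^ 2 + h ^ 2) / (τ s ^ 2 + ν s ^ 2 + h ^ 2) * (1 + τ s * ν s)) s)
    (hν : ∀ s : ℝ, HasDerivAt ν
      ((τ s * ν s - τ s ^ 2 * (τ s ^ 2 + h ^ 2)) / (τ s ^ 2 + ν s ^ 2 + h ^ 2)) s) :
    (∀ s : ℝ, τ s ≠ 0 →
      HasDerivAt (fun t => ν t / τ t)
        (-(τ s ^ 5 + τ s ^ 3 * ν s ^ 2 + h ^ 2 * τ s ^ 3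
            + h ^ 2 * τ s * ν s ^ 2 + h ^ 2 * ν s)
          / (τ s ^ 2 * (τ s ^ 2 + ν s ^ 2 + h ^ 2))) s) ∧
    (∀ s : ℝ, 0 < τ s → 0 < ν s → deriv (fun t => ν t / τ t) s < 0) := by
  have hasDerivAt_ratio := fun s => hasDerivAt_helicoidal_ratio (hτ s) (hν s)
  refine ⟨hasDerivAt_ratio, fun s τ_pos ν_pos => ?_⟩
  rw [(hasDerivAt_ratio s τ_pos.ne').deriv]
  exact helicoidal_ratio_slope_neg h τ_pos ν_pos.le
end

section
/- Both τ and ν have (possibly infinite) limits in each direction: there exist L₁, L₂, L₃, L₄ in the extended reals [−∞, +∞] such that τ(s) → L₁ and ν(s) → L₂ as s → +∞, and τ(s) → L₃ and ν(s) → L₄ as s → −∞. -/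
open Filter Topology

/- Context: `h > 0`; `τ, ν : ℝ → ℝ` solve the ODE system of the generating curve of a
helicoidal surface of pitch `h` rotating with unit angular speed under mean curvature flow:
`τ' = ((τ² + h²)/(τ² + ν² + h²))(1 + τν)`, `ν' = (τν − τ²(τ² + h²))/(τ² + ν² + h²)`,
with `r = √(τ² + ν²)` and signed curvature `k = (τ(τ² + h²) − ν)/(r² + h²)`. -/

/-!
Both `τ` and `ν` are eventually monotone. The sign of `τ'` is that of `1 + τν`, and `ν' = -τk`,
so it suffices that each of `τ`, `k` and `1 + τν` eventually has constant sign. A function which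
crosses zero only in one direction changes sign at most once, and indeed `τ' > 0` where `τ = 0`,
`k' > 0` where `k = 0`, and `(1 + τν)'` has the sign of `-τ` where `1 + τν = 0`. The system is
invariant under `(τ, ν) ↦ (-τ(-s), -ν(-s))`, which carries the limits at `+∞` to those at `-∞`.
-/

theorem exists_tendsto_atTop_of_monotoneOn_Ici {ι α : Type*} [Preorder ι] [IsDirectedOrder ι]
    [CompleteLattice α] [TopologicalSpace α] [SupConvergenceClass α] {f : ι → α} {a : ι}
    (hf : MonotoneOn f (Set.Ici a)) : ∃ L, Tendsto f atTop (𝓝 L) :=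
  ⟨_, tendsto_comp_val_Ici_atTop.1 <|
    tendsto_atTop_iSup fun x y hxy => hf x.2 y.2 hxy⟩

theorem exists_tendsto_atTop_of_antitoneOn_Ici {ι α : Type*} [Preorder ι] [IsDirectedOrder ι]
    [CompleteLattice α] [TopologicalSpace α] [InfConvergenceClass α] {f : ι → α} {a : ι}
    (hf : AntitoneOn f (Set.Ici a)) : ∃ L, Tendsto f atTop (𝓝 L) :=
  exists_tendsto_atTop_of_monotoneOn_Ici (α := αᵒᵈ) hf.dual_right

theorem exists_tendsto_coe_ereal_atBot_of_neg_comp_neg {f : ℝ → ℝ}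
    (hf : ∃ L : EReal, Tendsto (fun s => ((-f (-s) : ℝ) : EReal)) atTop (𝓝 L)) :
    ∃ L : EReal, Tendsto (fun s => (f s : EReal)) atBot (𝓝 L) := by
  obtain ⟨L, hL⟩ := hf
  exact ⟨-L, by simpa [Function.comp_def] using! (hL.comp tendsto_neg_atBot_atTop).neg⟩

section RealFunctions

variable {f : ℝ → ℝ}

theorem exists_tendsto_coe_ereal_atTop_of_eventuallyConst_sign_deriv
    (hf : ∀ᶠ s in atTop, DifferentiableAt ℝ f s)
    (hsign : EventuallyConst (fun s => SignType.sign (deriv f s)) atTop) :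
    ∃ L : EReal, Tendsto (fun s => (f s : EReal)) atTop (𝓝 L) := by
  obtain ⟨σ, hσ⟩ := eventuallyConst_iff_exists_eventuallyEq.1 hsign
  obtain ⟨a, ha⟩ := eventually_atTop.1 (hf.and hσ)
  have hcont : ContinuousOn f (Set.Ici a) :=
    fun s hs => (ha s hs).1.continuousAt.continuousWithinAt
  have hdiff : DifferentiableOn ℝ f (interior (Set.Ici a)) :=
    fun s hs => (ha s (interior_subset hs)).1.differentiableWithinAt
  have hderiv : ∀ s ∈ interior (Set.Ici a), SignType.sign (deriv f s) = σ :=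
    fun s hs => (ha s (interior_subset hs)).2
  rcases le_total 0 σ with hσ_nonneg | hσ_nonpos
  · have hmono : MonotoneOn f (Set.Ici a) :=
      monotoneOn_of_deriv_nonneg (convex_Ici a) hcont hdiff
        fun s hs => sign_nonneg_iff.1 (hσ_nonneg.trans_eq (hderiv s hs).symm)
    exact exists_tendsto_atTop_of_monotoneOn_Ici
      (EReal.coe_strictMono.monotone.comp_monotoneOn hmono)
  · have hanti : AntitoneOn f (Set.Ici a) :=
      antitoneOn_of_deriv_nonpos (convex_Ici a) hcont hdiff
        fun s hs => sign_nonpos_iff.1 ((hderiv s hs).trans_le hσ_nonpos)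
    exact exists_tendsto_atTop_of_antitoneOn_Ici
      (EReal.coe_strictMono.monotone.comp_antitoneOn hanti)

theorem pos_of_deriv_pos_of_eq_zero {a : ℝ} (hf : ∀ s, a ≤ s → DifferentiableAt ℝ f s)
    (hzero : ∀ s, a ≤ s → f s = 0 → 0 < deriv f s) (ha : 0 ≤ f a) {s : ℝ} (hs : a < s) :
    0 < f s := by
  have hnonneg : ∀ t, a ≤ t → 0 ≤ f t := fun t ht =>
    image_le_of_deriv_right_lt_deriv_boundary' (f := fun _ => 0) (f' := fun _ => 0)
      continuousOn_const (fun x _ => hasDerivWithinAt_const x _ _) ha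
      (fun x hx => (hf x hx.1).continuousAt.continuousWithinAt)
      (fun x hx => (hf x hx.1).hasDerivAt.hasDerivWithinAt)
      (fun x hx hfx => hzero x hx.1 hfx.symm) (Set.right_mem_Icc.2 ht)
  refine (hnonneg s hs.le).lt_of_ne' fun hfs => (hzero s hs.le hfs).ne' ?_
  have hmin : IsLocalMin f s := by
    filter_upwards [eventually_ge_nhds hs] with t ht
    exact hfs.trans_le (hnonneg t ht)
  exact hmin.deriv_eq_zero

theorem eventuallyConst_sign_of_deriv_pos_of_eq_zero
    (hf : ∀ᶠ s in atTop, DifferentiableAt ℝ f s)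
    (hzero : ∀ᶠ s in atTop, f s = 0 → 0 < deriv f s) :
    EventuallyConst (fun s => SignType.sign (f s)) atTop := by
  rw [eventuallyConst_iff_exists_eventuallyEq]
  obtain ⟨a, ha⟩ := eventually_atTop.1 (hf.and hzero)
  by_cases hex : ∃ b, a ≤ b ∧ 0 ≤ f b
  · obtain ⟨b, hab, hb⟩ := hex
    refine ⟨1, (eventually_gt_atTop b).mono fun s hs => sign_pos ?_⟩
    exact pos_of_deriv_pos_of_eq_zero (fun t ht => (ha t (hab.trans ht)).1)
      (fun t ht => (ha t (hab.trans ht)).2) hb hs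
  · push Not at hex
    exact ⟨-1, (eventually_ge_atTop a).mono fun s hs => sign_neg (hex s hs)⟩

theorem eventuallyConst_sign_of_mul_deriv_pos_of_eq_zero (c : ℝ)
    (hf : ∀ᶠ s in atTop, DifferentiableAt ℝ f s)
    (hzero : ∀ᶠ s in atTop, f s = 0 → 0 < c * deriv f s) :
    EventuallyConst (fun s => SignType.sign (f s)) atTop := by
  rcases le_total 0 c with hc | hc
  · exact eventuallyConst_sign_of_deriv_pos_of_eq_zero hf
      (hzero.mono fun s hs hfs => pos_of_mul_pos_right (hs hfs) hc)
  · have hneg : EventuallyConst (fun s => SignType.sign (-f s)) atTop := by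
      refine eventuallyConst_sign_of_deriv_pos_of_eq_zero (hf.mono fun s hs => hs.fun_neg)
        (hzero.mono fun s hs hfs => ?_)
      rw [deriv.fun_neg]
      exact neg_pos.2 (neg_of_mul_pos_right (hs (neg_eq_zero.1 hfs)) hc)
    simpa [Function.comp_def, Left.sign_neg] using hneg.comp Neg.neg

end RealFunctions

/-- The signed curvature `k` of the generating curve of a helicoidal surface of pitch `h`, as a
function of the components `x = τ` and `y = ν` of its position in the moving frame. -/
noncomputable def signedCurvature (h x y : ℝ) : ℝ :=
  (x * (x ^ 2 + h ^ 2) - y) / (x ^ 2 + y ^ 2 + h ^ 2)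

/-- The functions `τ = ⟨X, T⟩` and `ν = ⟨X, N⟩` satisfy, on the whole real line, the system
for the generating curve of a helicoidal surface of pitch `h` which rotates with unit angular
speed under mean curvature flow. -/
structure IsRotatingHelicoid (h : ℝ) (τ ν : ℝ → ℝ) : Prop where
  hasDerivAt_tau : ∀ s, HasDerivAt τ
    ((τ s ^ 2 + h ^ 2) / (τ s ^ 2 + ν s ^ 2 + h ^ 2) * (1 + τ s * ν s)) s
  hasDerivAt_nu : ∀ s, HasDerivAt ν
    ((τ s * ν s - τ s ^ 2 * (τ s ^ 2 + h ^ 2)) / (τ s ^ 2 + ν s ^ 2 + h ^ 2)) s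

namespace IsRotatingHelicoid

variable {h : ℝ} {τ ν : ℝ → ℝ}

theorem neg_comp_neg (hsol : IsRotatingHelicoid h τ ν) :
    IsRotatingHelicoid h (fun s => -τ (-s)) (fun s => -ν (-s)) where
  hasDerivAt_tau s := by
    simpa [Function.comp_def] using ((hsol.hasDerivAt_tau (-s)).comp s (hasDerivAt_neg s)).fun_neg
  hasDerivAt_nu s := by
    simpa [Function.comp_def] using ((hsol.hasDerivAt_nu (-s)).comp s (hasDerivAt_neg s)).fun_neg

theorem differentiable_tau (hsol : IsRotatingHelicoid h τ ν) : Differentiable ℝ τ :=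
  fun s => (hsol.hasDerivAt_tau s).differentiableAt

theorem differentiable_nu (hsol : IsRotatingHelicoid h τ ν) : Differentiable ℝ ν :=
  fun s => (hsol.hasDerivAt_nu s).differentiableAt

theorem deriv_nu (hsol : IsRotatingHelicoid h τ ν) (s : ℝ) :
    deriv ν s = -(τ s * signedCurvature h (τ s) (ν s)) := by
  rw [(hsol.hasDerivAt_nu s).deriv, signedCurvature]
  ring

theorem sign_deriv_tau (hsol : IsRotatingHelicoid h τ ν) (hh : h ≠ 0) (s : ℝ) :
    SignType.sign (deriv τ s) = SignType.sign (1 + τ s * ν s) := by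
  have hfactor : 0 < (τ s ^ 2 + h ^ 2) / (τ s ^ 2 + ν s ^ 2 + h ^ 2) := by positivity
  rw [(hsol.hasDerivAt_tau s).deriv, sign_mul, sign_pos hfactor, one_mul]

theorem deriv_tau_pos_iff (hsol : IsRotatingHelicoid h τ ν) (hh : h ≠ 0) (s : ℝ) :
    0 < deriv τ s ↔ 0 < 1 + τ s * ν s := by
  rw [← sign_eq_one_iff, hsol.sign_deriv_tau hh, sign_eq_one_iff]

theorem eventuallyConst_sign_tau (hsol : IsRotatingHelicoid h τ ν) (hh : h ≠ 0) :
    EventuallyConst (fun s => SignType.sign (τ s)) atTop := by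
  refine eventuallyConst_sign_of_deriv_pos_of_eq_zero
    (.of_forall hsol.differentiable_tau) (.of_forall fun s hτs => ?_)
  simp [hsol.deriv_tau_pos_iff hh, hτs]

theorem hasDerivAt_signedCurvature_of_eq_zero (hsol : IsRotatingHelicoid h τ ν) (hh : h ≠ 0)
    {s : ℝ} (hk : signedCurvature h (τ s) (ν s) = 0) :
    HasDerivAt (fun t => signedCurvature h (τ t) (ν t))
      ((3 * τ s ^ 2 + h ^ 2) * deriv τ s / (τ s ^ 2 + ν s ^ 2 + h ^ 2)) s := by
  have hdenom : τ s ^ 2 + ν s ^ 2 + h ^ 2 ≠ 0 := by positivity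
  have hnum : τ s * (τ s ^ 2 + h ^ 2) - ν s = 0 := (div_eq_zero_iff.1 hk).resolve_right hdenom
  have hτ := (hsol.differentiable_tau s).hasDerivAt
  have hν := (hsol.differentiable_nu s).hasDerivAt
  refine (((hτ.fun_mul ((hτ.fun_pow 2).add_const (h ^ 2))).fun_sub hν).fun_div
    (((hτ.fun_pow 2).fun_add (hν.fun_pow 2)).add_const (h ^ 2)) hdenom).congr_deriv ?_
  rw [hnum, hsol.deriv_nu, hk]
  field_simp
  ring

theorem eventuallyConst_sign_signedCurvature (hsol : IsRotatingHelicoid h τ ν) (hh : h ≠ 0) :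
    EventuallyConst (fun s => SignType.sign (signedCurvature h (τ s) (ν s))) atTop := by
  have hdenom (s : ℝ) : τ s ^ 2 + ν s ^ 2 + h ^ 2 ≠ 0 := by positivity
  refine eventuallyConst_sign_of_deriv_pos_of_eq_zero (.of_forall fun s => ?_)
    (.of_forall fun s hk => ?_)
  · have := hsol.differentiable_tau s
    have := hsol.differentiable_nu s
    unfold signedCurvature
    fun_prop (disch := exact hdenom _)
  · have hν : ν s = τ s * (τ s ^ 2 + h ^ 2) :=
      (sub_eq_zero.1 ((div_eq_zero_iff.1 hk).resolve_right (hdenom s))).symm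
    have hτν : 1 + τ s * ν s = 1 + τ s ^ 2 * (τ s ^ 2 + h ^ 2) := by rw [hν]; ring
    have hτ' : 0 < deriv τ s := by
      rw [hsol.deriv_tau_pos_iff hh, hτν]
      positivity
    rw [(hsol.hasDerivAt_signedCurvature_of_eq_zero hh hk).deriv]
    positivity

theorem deriv_nu_neg_of_one_add_mul_eq_zero (hsol : IsRotatingHelicoid h τ ν) (hh : h ≠ 0)
    {s : ℝ} (hτν : 1 + τ s * ν s = 0) : deriv ν s < 0 := by
  rw [(hsol.hasDerivAt_nu s).deriv]
  refine div_neg_of_neg_of_pos ?_ (by positivity)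
  have hnonneg : 0 ≤ τ s ^ 2 * (τ s ^ 2 + h ^ 2) := by positivity
  linarith

theorem eventuallyConst_sign_one_add_mul (hsol : IsRotatingHelicoid h τ ν) (hh : h ≠ 0) :
    EventuallyConst (fun s => SignType.sign (1 + τ s * ν s)) atTop := by
  obtain ⟨σ, hσ⟩ := eventuallyConst_iff_exists_eventuallyEq.1 (hsol.eventuallyConst_sign_tau hh)
  have hderiv (s : ℝ) : HasDerivAt (fun t => 1 + τ t * ν t)
      (deriv τ s * ν s + τ s * deriv ν s) s :=
    ((hsol.differentiable_tau s).hasDerivAt.fun_mul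
      (hsol.differentiable_nu s).hasDerivAt).const_add 1
  refine eventuallyConst_sign_of_mul_deriv_pos_of_eq_zero (-σ)
    (.of_forall fun s => (hderiv s).differentiableAt)
    (hσ.mono fun s (hs : SignType.sign (τ s) = σ) hτν => ?_)
  have hτ : τ s ≠ 0 := fun hτs => by simp [hτs] at hτν
  have hτ' : deriv τ s = 0 := by
    rw [← sign_eq_zero_iff, hsol.sign_deriv_tau hh, hτν, sign_zero]
  calc 0 < |τ s| * -deriv ν s :=
        mul_pos (abs_pos.2 hτ) (neg_pos.2 (hsol.deriv_nu_neg_of_one_add_mul_eq_zero hh hτν))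
    _ = -σ * deriv (fun t => 1 + τ t * ν t) s := by
        rw [(hderiv s).deriv, hτ', ← sign_mul_self, hs]
        ring

theorem exists_tendsto_tau_atTop (hsol : IsRotatingHelicoid h τ ν) (hh : h ≠ 0) :
    ∃ L : EReal, Tendsto (fun s => (τ s : EReal)) atTop (𝓝 L) := by
  refine exists_tendsto_coe_ereal_atTop_of_eventuallyConst_sign_deriv
    (.of_forall hsol.differentiable_tau) ?_
  simpa only [hsol.sign_deriv_tau hh] using hsol.eventuallyConst_sign_one_add_mul hh

theorem exists_tendsto_nu_atTop (hsol : IsRotatingHelicoid h τ ν) (hh : h ≠ 0) :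
    ∃ L : EReal, Tendsto (fun s => (ν s : EReal)) atTop (𝓝 L) := by
  refine exists_tendsto_coe_ereal_atTop_of_eventuallyConst_sign_deriv
    (.of_forall hsol.differentiable_nu) ?_
  simp only [hsol.deriv_nu, Left.sign_neg, sign_mul]
  exact (hsol.eventuallyConst_sign_tau hh).comp₂ (fun σ κ => -(σ * κ))
    (hsol.eventuallyConst_sign_signedCurvature hh)

end IsRotatingHelicoid

/-- Lemma 4.3. Both `τ` and `ν` have (possibly infinite) limits
as `s → +∞` and as `s → −∞`. -/
theorem tau_nu_have_limits
    (h : ℝ) (hh : 0 < h) (τ ν : ℝ → ℝ)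
    (hτ : ∀ s : ℝ, HasDerivAt τ
      ((τ s ^ 2 + h ^ 2) / (τ s ^ 2 + ν s ^ 2 + h ^ 2) * (1 + τ s * ν s)) s)
    (hν : ∀ s : ℝ, HasDerivAt ν
      ((τ s * ν s - τ s ^ 2 * (τ s ^ 2 + h ^ 2)) / (τ s ^ 2 + ν s ^ 2 + h ^ 2)) s) :
    ∃ L₁ L₂ L₃ L₄ : EReal,
      Tendsto (fun s => (τ s : EReal)) atTop (𝓝 L₁) ∧
      Tendsto (fun s => (ν s : EReal)) atTop (𝓝 L₂) ∧
      Tendsto (fun s => (τ s : EReal)) atBot (𝓝 L₃) ∧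
      Tendsto (fun s => (ν s : EReal)) atBot (𝓝 L₄) := by
  have hsol : IsRotatingHelicoid h τ ν := ⟨hτ, hν⟩
  obtain ⟨L₁, hL₁⟩ := hsol.exists_tendsto_tau_atTop hh.ne'
  obtain ⟨L₂, hL₂⟩ := hsol.exists_tendsto_nu_atTop hh.ne'
  obtain ⟨L₃, hL₃⟩ := exists_tendsto_coe_ereal_atBot_of_neg_comp_neg
    (hsol.neg_comp_neg.exists_tendsto_tau_atTop hh.ne')
  obtain ⟨L₄, hL₄⟩ := exists_tendsto_coe_ereal_atBot_of_neg_comp_neg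
    (hsol.neg_comp_neg.exists_tendsto_nu_atTop hh.ne')
  exact ⟨L₁, L₂, L₃, L₄, hL₁, hL₂, hL₃, hL₄⟩
end

section
/- ν(s) tends to −∞ as s → +∞, and ν(s) tends to +∞ as s → −∞. -/
open Filter Topology

/- Context: `h > 0`; `τ, ν : ℝ → ℝ` solve the ODE system of the generating curve of a
helicoidal surface of pitch `h` rotating with unit angular speed under mean curvature flow:
`τ' = ((τ² + h²)/(τ² + ν² + h²))(1 + τν)`, `ν' = (τν − τ²(τ² + h²))/(τ² + ν² + h²)`,
with `r = √(τ² + ν²)` and signed curvature `k = (τ(τ² + h²) − ν)/(r² + h²)`. -/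

/-!
The terms in `τν` cancel in the derivative of `P = arctan (τ / h) / h - ν`, leaving
`P' = (τ² (τ² + h²) + 1) / (τ² + ν² + h²) > 0`. Since `arctan` is bounded, a bound on `P` bounds
`ν`, and then bounds `P'` away from `0`. Hence `P` cannot stay bounded in either direction of time,
and `ν` differs from `-P` by a bounded term.
-/

section RealDeriv

variable {f : ℝ → ℝ}

lemma tendsto_atTop_atTop_of_le_deriv_of_abs_le (hf : Differentiable ℝ f)
    (hf' : ∀ M, ∃ c > 0, ∀ x, |f x| ≤ M → c ≤ deriv f x) : Tendsto f atTop atTop := by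
  have hmono : Monotone f := monotone_of_deriv_nonneg hf fun x ↦
    let ⟨_, hc, hle⟩ := hf' |f x|
    hc.le.trans (hle x le_rfl)
  refine tendsto_atTop_atTop_of_monotone hmono fun b ↦ ?_
  by_contra! hlt
  obtain ⟨c, hc, hle⟩ := hf' (max |f 0| |b|)
  have habs : ∀ x, 0 ≤ x → |f x| ≤ max |f 0| |b| := fun x hx ↦
    abs_le_max_abs_abs (hmono hx) (hlt x).le
  have hx₀ : 0 ≤ (b - f 0) / c := div_nonneg (sub_nonneg.2 (hlt 0).le) hc.le
  have hgrowth : c * ((b - f 0) / c - 0) ≤ f ((b - f 0) / c) - f 0 :=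
    (convex_Ici (0 : ℝ)).mul_sub_le_image_sub_of_le_deriv hf.continuous.continuousOn
      hf.differentiableOn (fun x hx ↦ hle x (habs x (interior_subset hx)))
      0 Set.self_mem_Ici _ hx₀ hx₀
  rw [sub_zero, mul_div_cancel₀ _ hc.ne'] at hgrowth
  linarith [hlt ((b - f 0) / c)]

lemma tendsto_atBot_atBot_of_le_deriv_of_abs_le (hf : Differentiable ℝ f)
    (hf' : ∀ M, ∃ c > 0, ∀ x, |f x| ≤ M → c ≤ deriv f x) : Tendsto f atBot atBot := by
  have hderiv : ∀ x, deriv (fun y ↦ -f (-y)) x = deriv f (-x) := fun x ↦ by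
    rw [deriv.fun_neg, deriv_comp_neg, neg_neg]
  have hreversed : Tendsto (fun x ↦ -f (-x)) atTop atTop := by
    refine tendsto_atTop_atTop_of_le_deriv_of_abs_le (by fun_prop) fun M ↦ ?_
    obtain ⟨c, hc, hle⟩ := hf' M
    refine ⟨c, hc, fun x hx ↦ ?_⟩
    rw [hderiv]
    exact hle (-x) (by rwa [abs_neg] at hx)
  simpa [Function.comp_def] using
    tendsto_neg_atTop_atBot.comp (hreversed.comp tendsto_neg_atBot_atTop)

end RealDeriv

lemma abs_arctan_le_pi_div_two (x : ℝ) : |Real.arctan x| ≤ Real.pi / 2 :=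
  abs_le.2 ⟨(Real.neg_pi_div_two_lt_arctan x).le, (Real.arctan_lt_pi_div_two x).le⟩

/-- A quantity that strictly increases along every solution of the system and differs from `-ν` by
a bounded term; `t` and `n` stand for the values of `τ` and `ν`. -/
noncomputable def helicoidalPotential (h t n : ℝ) : ℝ :=
  Real.arctan (t / h) / h - n

/-- The derivative of `helicoidalPotential` along a solution passing through `(t, n)`, in the form
left after the terms in `t * n` cancel. -/
noncomputable def helicoidalPotentialRate (h t n : ℝ) : ℝ :=
  (t ^ 2 * (t ^ 2 + h ^ 2) + 1) / (t ^ 2 + n ^ 2 + h ^ 2)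

section HelicoidalPotential

variable {h : ℝ}

lemma abs_helicoidalPotential_add_le (t n : ℝ) :
    |helicoidalPotential h t n + n| ≤ Real.pi / 2 / |h| := by
  rw [helicoidalPotential, sub_add_cancel, abs_div]
  gcongr
  exact abs_arctan_le_pi_div_two _

lemma hasDerivAt_helicoidalPotential (hh : h ≠ 0) {τ ν : ℝ → ℝ} {s : ℝ}
    (hτ : HasDerivAt τ
      ((τ s ^ 2 + h ^ 2) / (τ s ^ 2 + ν s ^ 2 + h ^ 2) * (1 + τ s * ν s)) s)
    (hν : HasDerivAt ν
      ((τ s * ν s - τ s ^ 2 * (τ s ^ 2 + h ^ 2)) / (τ s ^ 2 + ν s ^ 2 + h ^ 2)) s) :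
    HasDerivAt (fun x ↦ helicoidalPotential h (τ x) (ν x))
      (helicoidalPotentialRate h (τ s) (ν s)) s := by
  refine (((hτ.div_const h).arctan.div_const h).sub hν).congr_deriv ?_
  rw [helicoidalPotentialRate]
  field_simp
  ring

lemma le_helicoidalPotentialRate_of_abs_le (hh : h ≠ 0) {t n M : ℝ} (hn : |n| ≤ M) :
    h ^ 2 / ((1 + h ^ 2) * (M ^ 2 + h ^ 2)) ≤ helicoidalPotentialRate h t n := by
  have hnum : (t ^ 2 + h ^ 2) / (1 + h ^ 2) ≤ t ^ 2 * (t ^ 2 + h ^ 2) + 1 := by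
    rw [div_le_iff₀ (by positivity)]
    nlinarith [sq_nonneg (t ^ 2 - 1), mul_nonneg (sq_nonneg t) (sq_nonneg h),
      mul_nonneg (sq_nonneg (t * h)) (add_nonneg (sq_nonneg t) (sq_nonneg h))]
  have hnM : n ^ 2 ≤ M ^ 2 := sq_le_sq.2 (hn.trans (le_abs_self M))
  have hquot : h ^ 2 / (M ^ 2 + h ^ 2) ≤ (t ^ 2 + h ^ 2) / (t ^ 2 + n ^ 2 + h ^ 2) := by
    rw [div_le_div_iff₀ (by positivity) (by positivity)]
    nlinarith [mul_le_mul_of_nonneg_left hnM (sq_nonneg h), mul_nonneg (sq_nonneg t) (sq_nonneg M)]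
  calc h ^ 2 / ((1 + h ^ 2) * (M ^ 2 + h ^ 2))
      = h ^ 2 / (M ^ 2 + h ^ 2) / (1 + h ^ 2) := by rw [div_div, mul_comm (1 + h ^ 2)]
    _ ≤ (t ^ 2 + h ^ 2) / (t ^ 2 + n ^ 2 + h ^ 2) / (1 + h ^ 2) := by gcongr
    _ = (t ^ 2 + h ^ 2) / (1 + h ^ 2) / (t ^ 2 + n ^ 2 + h ^ 2) := div_right_comm ..
    _ ≤ helicoidalPotentialRate h t n := by rw [helicoidalPotentialRate]; gcongr

lemma exists_pos_le_helicoidalPotentialRate (hh : h ≠ 0) (M : ℝ) :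
    ∃ c > 0, ∀ t n, |helicoidalPotential h t n| ≤ M → c ≤ helicoidalPotentialRate h t n := by
  refine ⟨h ^ 2 / ((1 + h ^ 2) * ((Real.pi / 2 / |h| + M) ^ 2 + h ^ 2)), by positivity,
    fun t n hM ↦ le_helicoidalPotentialRate_of_abs_le hh ?_⟩
  calc |n| = |(helicoidalPotential h t n + n) - helicoidalPotential h t n| := by
        rw [add_sub_cancel_left]
    _ ≤ |helicoidalPotential h t n + n| + |helicoidalPotential h t n| := abs_sub _ _
    _ ≤ Real.pi / 2 / |h| + M := add_le_add (abs_helicoidalPotential_add_le t n) hM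

end HelicoidalPotential

/-- Lemma 4.4. `ν → −∞` as `s → +∞` and `ν → +∞` as `s → −∞`. -/
theorem nu_tendsto_infinity
    (h : ℝ) (hh : 0 < h) (τ ν : ℝ → ℝ)
    (hτ : ∀ s : ℝ, HasDerivAt τ
      ((τ s ^ 2 + h ^ 2) / (τ s ^ 2 + ν s ^ 2 + h ^ 2) * (1 + τ s * ν s)) s)
    (hν : ∀ s : ℝ, HasDerivAt ν
      ((τ s * ν s - τ s ^ 2 * (τ s ^ 2 + h ^ 2)) / (τ s ^ 2 + ν s ^ 2 + h ^ 2)) s) :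
    Tendsto ν atTop atBot ∧ Tendsto ν atBot atTop := by
  set P : ℝ → ℝ := fun s ↦ helicoidalPotential h (τ s) (ν s)
  have hP s := hasDerivAt_helicoidalPotential hh.ne' (hτ s) (hν s)
  have hP_diff : Differentiable ℝ P := fun s ↦ (hP s).differentiableAt
  have hP_deriv : ∀ M, ∃ c > 0, ∀ s, |P s| ≤ M → c ≤ deriv P s := fun M ↦ by
    obtain ⟨c, hc, hle⟩ := exists_pos_le_helicoidalPotentialRate hh.ne' M
    exact ⟨c, hc, fun s hs ↦ (hP s).deriv ▸ hle (τ s) (ν s) hs⟩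
  have hbdd s : |P s + ν s| ≤ Real.pi / 2 / |h| := abs_helicoidalPotential_add_le (τ s) (ν s)
  constructor
  · have hP_top := tendsto_atTop_atTop_of_le_deriv_of_abs_le hP_diff hP_deriv
    exact tendsto_atBot_mono (fun s ↦ le_sub_iff_add_le'.2 (abs_le.1 (hbdd s)).2)
      (tendsto_atBot_add_const_left _ _ (tendsto_neg_atTop_atBot.comp hP_top))
  · have hP_bot := tendsto_atBot_atBot_of_le_deriv_of_abs_le hP_diff hP_deriv
    exact tendsto_atTop_mono (fun s ↦ sub_le_iff_le_add'.2 (abs_le.1 (hbdd s)).1)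
      (tendsto_atTop_add_const_left _ _ (tendsto_neg_atBot_atTop.comp hP_bot))
end

section
/- τ has a finite limit in each direction: there exist real numbers a and b such that τ(s) → a as s → +∞ and τ(s) → b as s → −∞. -/
open Filter Topology

/- Context: `h > 0`; `τ, ν : ℝ → ℝ` solve the ODE system of the generating curve of a
helicoidal surface of pitch `h` rotating with unit angular speed under mean curvature flow:
`τ' = ((τ² + h²)/(τ² + ν² + h²))(1 + τν)`, `ν' = (τν − τ²(τ² + h²))/(τ² + ν² + h²)`,
with `r = √(τ² + ν²)` and signed curvature `k = (τ(τ² + h²) − ν)/(r² + h²)`. -/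

/-!
The system is invariant under `(τ, ν)(s) ↦ -(τ, ν)(-s)`, so only `s → +∞` matters. There `τ` is
eventually monotone: `τ` can cross zero only upwards, so it has an eventual sign, and then
`1 + τν`, which has the sign of `τ'`, can cross zero in only one direction, because its derivative
at a zero has the sign of `-τ`.

It remains to bound `τ`. If `τ < 0`, then `(τ² + ν²)' = 2τ` makes `τ² + ν²` decrease. If `τ ≥ 0`
decreases, it is bounded already. If `τ` increased to `+∞`, then `h²ν - τ` would decrease, so that
`h²ν ≤ 2τ` eventually; by this bound `ν + (h²/4)τ` would decrease as well, which is absurd since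
`ν ≥ -1/τ`.
-/

section EventualSigns

variable {f f' : ℝ → ℝ}

theorem exists_monotoneOn_Ici_of_hasDerivAt_nonneg
    (hf : ∀ᶠ s in atTop, HasDerivAt f (f' s) s) (hf' : ∀ᶠ s in atTop, 0 ≤ f' s) :
    ∃ a, MonotoneOn f (Set.Ici a) := by
  obtain ⟨a, ha⟩ := eventually_atTop.1 (hf.and hf')
  exact ⟨a, monotoneOn_of_hasDerivWithinAt_nonneg (f' := f') (convex_Ici a)
    (fun s hs ↦ (ha s hs).1.continuousAt.continuousWithinAt)
    (fun s hs ↦ (ha s (interior_subset hs)).1.hasDerivWithinAt)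
    (fun s hs ↦ (ha s (interior_subset hs)).2)⟩

theorem exists_antitoneOn_Ici_of_hasDerivAt_nonpos
    (hf : ∀ᶠ s in atTop, HasDerivAt f (f' s) s) (hf' : ∀ᶠ s in atTop, f' s ≤ 0) :
    ∃ a, AntitoneOn f (Set.Ici a) := by
  obtain ⟨a, ha⟩ := exists_monotoneOn_Ici_of_hasDerivAt_nonneg
    (hf.mono fun _ hs ↦ hs.neg) (hf'.mono fun _ hs ↦ neg_nonneg.2 hs)
  exact ⟨a, fun x hx y hy hxy ↦ neg_le_neg_iff.1 (ha hx hy hxy)⟩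

theorem isBoundedUnder_le_of_hasDerivAt_nonpos
    (hf : ∀ᶠ s in atTop, HasDerivAt f (f' s) s) (hf' : ∀ᶠ s in atTop, f' s ≤ 0) :
    IsBoundedUnder (· ≤ ·) atTop f := by
  obtain ⟨a, ha⟩ := exists_antitoneOn_Ici_of_hasDerivAt_nonpos hf hf'
  exact isBoundedUnder_of_eventually_le <|
    (eventually_ge_atTop a).mono fun s hs ↦ ha Set.self_mem_Ici hs hs

theorem tendsto_atTop_or_exists_tendsto_of_hasDerivAt_nonneg
    (hf : ∀ᶠ s in atTop, HasDerivAt f (f' s) s) (hf' : ∀ᶠ s in atTop, 0 ≤ f' s) :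
    Tendsto f atTop atTop ∨ ∃ l, Tendsto f atTop (𝓝 l) := by
  obtain ⟨a, ha⟩ := exists_monotoneOn_Ici_of_hasDerivAt_nonneg hf hf'
  simpa only [tendsto_comp_val_Ici_atTop] using
    tendsto_atTop_of_monotone (Set.monotoneOn_iff_monotone.1 ha)

theorem exists_tendsto_of_hasDerivAt_nonneg
    (hf : ∀ᶠ s in atTop, HasDerivAt f (f' s) s) (hf' : ∀ᶠ s in atTop, 0 ≤ f' s)
    (hbdd : IsBoundedUnder (· ≤ ·) atTop f) :
    ∃ l, Tendsto f atTop (𝓝 l) :=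
  (tendsto_atTop_or_exists_tendsto_of_hasDerivAt_nonneg hf hf').resolve_left
    fun hinfty ↦ not_isBoundedUnder_of_tendsto_atTop hinfty hbdd

theorem exists_tendsto_of_hasDerivAt_nonpos
    (hf : ∀ᶠ s in atTop, HasDerivAt f (f' s) s) (hf' : ∀ᶠ s in atTop, f' s ≤ 0)
    (hbdd : IsBoundedUnder (· ≥ ·) atTop f) :
    ∃ l, Tendsto f atTop (𝓝 l) := by
  obtain ⟨l, hl⟩ := exists_tendsto_of_hasDerivAt_nonneg
    (hf.mono fun _ hs ↦ hs.neg) (hf'.mono fun _ hs ↦ neg_nonneg.2 hs)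
    (isBoundedUnder_le_neg.2 hbdd)
  exact ⟨-l, by simpa using hl.neg⟩

theorem eventually_neg_or_eventually_nonneg_of_hasDerivAt_pos_of_eq_zero
    (hf : ∀ᶠ s in atTop, HasDerivAt f (f' s) s) (hf' : ∀ᶠ s in atTop, f s = 0 → 0 < f' s) :
    (∀ᶠ s in atTop, f s < 0) ∨ ∀ᶠ s in atTop, 0 ≤ f s := by
  refine or_iff_not_imp_left.2 fun hneg ↦ ?_
  obtain ⟨a, ha⟩ := eventually_atTop.1 (hf.and hf')
  obtain ⟨b, hab, hb⟩ := frequently_atTop.1 (not_eventually.1 hneg) a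
  filter_upwards [eventually_ge_atTop b] with s hs
  exact image_le_of_deriv_right_lt_deriv_boundary' (f := fun _ ↦ 0) (f' := fun _ ↦ 0)
    continuousOn_const (fun x _ ↦ hasDerivWithinAt_const ..) (not_lt.1 hb)
    (fun x hx ↦ (ha x (hab.trans hx.1)).1.continuousAt.continuousWithinAt)
    (fun x hx ↦ (ha x (hab.trans hx.1)).1.hasDerivWithinAt)
    (fun x hx hx0 ↦ (ha x (hab.trans hx.1)).2 hx0.symm) ⟨hs, le_rfl⟩

end EventualSigns

theorem mul_add_sq_div_four_mul_le {h t n : ℝ} (hh : h ≠ 0) (ht : 0 ≤ t)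
    (hn : h ^ 2 * n ≤ 2 * t) (hht : h ^ 2 ≤ t ^ 2) (ht8 : 8 / h ^ 2 ≤ t ^ 2) :
    t * n + h ^ 2 / 4 * ((t ^ 2 + h ^ 2) * (1 + t * n)) ≤ t ^ 2 * (t ^ 2 + h ^ 2) := by
  have hh2 : 0 < h ^ 2 := by positivity
  have htn : h ^ 2 * (t * n) ≤ 2 * t ^ 2 := by nlinarith
  have hlow : t * n ≤ t ^ 2 * (t ^ 2 + h ^ 2) / 4 := by
    have ht8' : 8 ≤ t ^ 2 * h ^ 2 := (div_le_iff₀ hh2).1 ht8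
    have : h ^ 2 * (t * n) ≤ h ^ 2 * (t ^ 2 * t ^ 2 / 4) := by
      nlinarith [mul_le_mul_of_nonneg_left ht8' (sq_nonneg t)]
    nlinarith [le_of_mul_le_mul_left this hh2, mul_nonneg (sq_nonneg t) hh2.le]
  have hhigh : (t ^ 2 + h ^ 2) * (h ^ 2 + h ^ 2 * (t * n)) ≤ (t ^ 2 + h ^ 2) * (3 * t ^ 2) := by
    gcongr
    linarith
  linarith

/-- The ODE system for the tangential component `τ` and the normal component `ν` of the position
vector along the generating curve of a helicoidal surface of pitch `h` that rotates with unit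
angular speed under mean curvature flow. Solutions are defined on all of `ℝ`. -/
structure IsHelicoidalProfile (h : ℝ) (τ ν : ℝ → ℝ) : Prop where
  hasDerivAt_tangential : ∀ s, HasDerivAt τ
    ((τ s ^ 2 + h ^ 2) / (τ s ^ 2 + ν s ^ 2 + h ^ 2) * (1 + τ s * ν s)) s
  hasDerivAt_normal : ∀ s, HasDerivAt ν
    ((τ s * ν s - τ s ^ 2 * (τ s ^ 2 + h ^ 2)) / (τ s ^ 2 + ν s ^ 2 + h ^ 2)) s

namespace IsHelicoidalProfile

variable {h : ℝ} {τ ν : ℝ → ℝ}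

theorem neg_comp_neg (hsol : IsHelicoidalProfile h τ ν) :
    IsHelicoidalProfile h (fun s ↦ -τ (-s)) (fun s ↦ -ν (-s)) where
  hasDerivAt_tangential s :=
    ((hsol.hasDerivAt_tangential (-s)).scomp s (hasDerivAt_neg s)).neg.congr_deriv (by simp)
  hasDerivAt_normal s :=
    ((hsol.hasDerivAt_normal (-s)).scomp s (hasDerivAt_neg s)).neg.congr_deriv (by simp)

theorem hasDerivAt_sq_add_sq (hsol : IsHelicoidalProfile h τ ν) (hh : h ≠ 0) (s : ℝ) :
    HasDerivAt (fun s ↦ τ s ^ 2 + ν s ^ 2) (2 * τ s) s := by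
  have hD : τ s ^ 2 + ν s ^ 2 + h ^ 2 ≠ 0 := by positivity
  refine (((hsol.hasDerivAt_tangential s).pow 2).add
    ((hsol.hasDerivAt_normal s).pow 2)).congr_deriv ?_
  field_simp
  ring

theorem hasDerivAt_one_add_mul (hsol : IsHelicoidalProfile h τ ν) (s : ℝ) :
    HasDerivAt (fun s ↦ 1 + τ s * ν s)
      (((1 + τ s * ν s) * (ν s * (τ s ^ 2 + h ^ 2) + τ s) -
        τ s * (1 + τ s ^ 2 * (τ s ^ 2 + h ^ 2))) / (τ s ^ 2 + ν s ^ 2 + h ^ 2)) s :=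
  (((hsol.hasDerivAt_tangential s).mul (hsol.hasDerivAt_normal s)).const_add 1).congr_deriv
    (by ring)

theorem hasDerivAt_sq_mul_normal_sub (hsol : IsHelicoidalProfile h τ ν) (s : ℝ) :
    HasDerivAt (fun s ↦ h ^ 2 * ν s - τ s)
      (-(h ^ 2 + τ s ^ 2 * (1 + τ s * ν s) + h ^ 2 * τ s ^ 2 * (τ s ^ 2 + h ^ 2)) /
        (τ s ^ 2 + ν s ^ 2 + h ^ 2)) s :=
  (((hsol.hasDerivAt_normal s).const_mul (h ^ 2)).sub
    (hsol.hasDerivAt_tangential s)).congr_deriv (by ring)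

theorem hasDerivAt_normal_add_mul (hsol : IsHelicoidalProfile h τ ν) (c s : ℝ) :
    HasDerivAt (fun s ↦ ν s + c * τ s)
      ((τ s * ν s + c * ((τ s ^ 2 + h ^ 2) * (1 + τ s * ν s)) - τ s ^ 2 * (τ s ^ 2 + h ^ 2)) /
        (τ s ^ 2 + ν s ^ 2 + h ^ 2)) s :=
  ((hsol.hasDerivAt_normal s).add
    ((hsol.hasDerivAt_tangential s).const_mul c)).congr_deriv (by ring)

theorem eventually_tangential_neg_or_nonneg (hsol : IsHelicoidalProfile h τ ν) (hh : h ≠ 0) :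
    (∀ᶠ s in atTop, τ s < 0) ∨ ∀ᶠ s in atTop, 0 ≤ τ s := by
  refine eventually_neg_or_eventually_nonneg_of_hasDerivAt_pos_of_eq_zero
    (.of_forall hsol.hasDerivAt_tangential) (.of_forall fun s hs ↦ ?_)
  rw [hs, zero_mul, add_zero]
  positivity

theorem eventually_one_add_mul_neg_or_nonneg_of_neg (hsol : IsHelicoidalProfile h τ ν)
    (hh : h ≠ 0) (hτ : ∀ᶠ s in atTop, τ s < 0) :
    (∀ᶠ s in atTop, 1 + τ s * ν s < 0) ∨ ∀ᶠ s in atTop, 0 ≤ 1 + τ s * ν s := by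
  refine eventually_neg_or_eventually_nonneg_of_hasDerivAt_pos_of_eq_zero
    (.of_forall hsol.hasDerivAt_one_add_mul) ?_
  filter_upwards [hτ] with s hs hzero
  rw [hzero, zero_mul, zero_sub, ← neg_mul]
  have := neg_pos.2 hs
  positivity

theorem eventually_one_add_mul_pos_or_nonpos_of_nonneg (hsol : IsHelicoidalProfile h τ ν)
    (hh : h ≠ 0) (hτ : ∀ᶠ s in atTop, 0 ≤ τ s) :
    (∀ᶠ s in atTop, 0 < 1 + τ s * ν s) ∨ ∀ᶠ s in atTop, 1 + τ s * ν s ≤ 0 := by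
  have hcross : ∀ᶠ s in atTop, -(1 + τ s * ν s) = 0 →
      0 < -(((1 + τ s * ν s) * (ν s * (τ s ^ 2 + h ^ 2) + τ s) -
        τ s * (1 + τ s ^ 2 * (τ s ^ 2 + h ^ 2))) / (τ s ^ 2 + ν s ^ 2 + h ^ 2)) := by
    filter_upwards [hτ] with s hs hzero
    rw [neg_eq_zero] at hzero
    have hτ_pos : 0 < τ s := hs.lt_of_ne' fun hτ0 ↦ by simp [hτ0] at hzero
    rw [hzero, zero_mul, zero_sub, neg_div, neg_neg]
    positivity
  simpa only [neg_lt_zero, neg_nonneg] using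
    eventually_neg_or_eventually_nonneg_of_hasDerivAt_pos_of_eq_zero
      (.of_forall fun s ↦ (hsol.hasDerivAt_one_add_mul s).fun_neg) hcross

theorem isBoundedUnder_ge_of_tangential_neg (hsol : IsHelicoidalProfile h τ ν)
    (hh : h ≠ 0) (hτ : ∀ᶠ s in atTop, τ s < 0) : IsBoundedUnder (· ≥ ·) atTop τ := by
  obtain ⟨R, hR⟩ := (isBoundedUnder_le_of_hasDerivAt_nonpos
    (.of_forall (hsol.hasDerivAt_sq_add_sq hh))
    (hτ.mono fun s hs ↦ by linarith)).eventually_le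
  refine isBoundedUnder_of_eventually_ge (a := -√R) (hR.mono fun s hs ↦ ?_)
  exact (abs_le.1 (Real.abs_le_sqrt ((le_add_of_nonneg_right (sq_nonneg _)).trans hs))).1

theorem eventually_sq_mul_normal_le (hsol : IsHelicoidalProfile h τ ν)
    (hinfty : Tendsto τ atTop atTop) (hP : ∀ᶠ s in atTop, 0 ≤ 1 + τ s * ν s) :
    ∀ᶠ s in atTop, h ^ 2 * ν s ≤ 2 * τ s := by
  have hderiv : ∀ᶠ s in atTop,
      -(h ^ 2 + τ s ^ 2 * (1 + τ s * ν s) + h ^ 2 * τ s ^ 2 * (τ s ^ 2 + h ^ 2)) /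
        (τ s ^ 2 + ν s ^ 2 + h ^ 2) ≤ 0 :=
    hP.mono fun s hs ↦ div_nonpos_of_nonpos_of_nonneg (neg_nonpos.2 (by positivity))
      (by positivity)
  obtain ⟨C, hC⟩ := (isBoundedUnder_le_of_hasDerivAt_nonpos
    (.of_forall hsol.hasDerivAt_sq_mul_normal_sub) hderiv).eventually_le
  filter_upwards [hC, hinfty.eventually_ge_atTop C] with s hs hτC
  linarith

theorem not_tendsto_atTop_of_one_add_mul_nonneg (hsol : IsHelicoidalProfile h τ ν)
    (hh : h ≠ 0) (hP : ∀ᶠ s in atTop, 0 ≤ 1 + τ s * ν s) : ¬ Tendsto τ atTop atTop := by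
  intro hinfty
  have hsq : Tendsto (fun s ↦ τ s ^ 2) atTop atTop :=
    (tendsto_pow_atTop two_ne_zero).comp hinfty
  have hbdd : IsBoundedUnder (· ≤ ·) atTop fun s ↦ ν s + h ^ 2 / 4 * τ s := by
    refine isBoundedUnder_le_of_hasDerivAt_nonpos
      (.of_forall (hsol.hasDerivAt_normal_add_mul (h ^ 2 / 4))) ?_
    filter_upwards [hinfty.eventually_ge_atTop 0, hsol.eventually_sq_mul_normal_le hinfty hP,
      hsq.eventually_ge_atTop (h ^ 2), hsq.eventually_ge_atTop (8 / h ^ 2)] with s h0 hν hτh hτ8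
    exact div_nonpos_of_nonpos_of_nonneg
      (sub_nonpos.2 (mul_add_sq_div_four_mul_le hh h0 hν hτh hτ8)) (by positivity)
  have hν : ∀ᶠ s in atTop, -1 ≤ ν s := by
    filter_upwards [hinfty.eventually_ge_atTop 1, hP] with s hτ1 hs
    nlinarith
  exact not_isBoundedUnder_of_tendsto_atTop
    (tendsto_atTop_add_left_of_le' atTop (-1) hν (hinfty.const_mul_atTop (by positivity))) hbdd

theorem exists_tendsto_of_one_add_mul_nonpos (hsol : IsHelicoidalProfile h τ ν)
    (hP : ∀ᶠ s in atTop, 1 + τ s * ν s ≤ 0) (hbdd : IsBoundedUnder (· ≥ ·) atTop τ) :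
    ∃ a, Tendsto τ atTop (𝓝 a) :=
  exists_tendsto_of_hasDerivAt_nonpos (.of_forall hsol.hasDerivAt_tangential)
    (hP.mono fun s hs ↦ mul_nonpos_of_nonneg_of_nonpos (by positivity) hs) hbdd

theorem exists_tendsto_of_one_add_mul_nonneg (hsol : IsHelicoidalProfile h τ ν)
    (hh : h ≠ 0) (hP : ∀ᶠ s in atTop, 0 ≤ 1 + τ s * ν s) :
    ∃ a, Tendsto τ atTop (𝓝 a) :=
  (tendsto_atTop_or_exists_tendsto_of_hasDerivAt_nonneg (.of_forall hsol.hasDerivAt_tangential)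
    (hP.mono fun s hs ↦ mul_nonneg (by positivity) hs)).resolve_left
    (hsol.not_tendsto_atTop_of_one_add_mul_nonneg hh hP)

theorem exists_tendsto_atTop (hsol : IsHelicoidalProfile h τ ν) (hh : h ≠ 0) :
    ∃ a, Tendsto τ atTop (𝓝 a) := by
  rcases hsol.eventually_tangential_neg_or_nonneg hh with hτ | hτ
  · rcases hsol.eventually_one_add_mul_neg_or_nonneg_of_neg hh hτ with hP | hP
    · exact hsol.exists_tendsto_of_one_add_mul_nonpos (hP.mono fun _ ↦ le_of_lt)
        (hsol.isBoundedUnder_ge_of_tangential_neg hh hτ)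
    · exact hsol.exists_tendsto_of_one_add_mul_nonneg hh hP
  · rcases hsol.eventually_one_add_mul_pos_or_nonpos_of_nonneg hh hτ with hP | hP
    · exact hsol.exists_tendsto_of_one_add_mul_nonneg hh (hP.mono fun _ ↦ le_of_lt)
    · exact hsol.exists_tendsto_of_one_add_mul_nonpos hP (isBoundedUnder_of_eventually_ge hτ)

theorem exists_tendsto_atBot (hsol : IsHelicoidalProfile h τ ν) (hh : h ≠ 0) :
    ∃ b, Tendsto τ atBot (𝓝 b) := by
  obtain ⟨b, hb⟩ := hsol.neg_comp_neg.exists_tendsto_atTop hh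
  exact ⟨-b, tendsto_comp_neg_atTop_iff.1 (by simpa using hb.neg)⟩

end IsHelicoidalProfile

/-- Lemma 4.5. `τ` has a finite limit in each direction. -/
theorem tau_finite_limits
    (h : ℝ) (hh : 0 < h) (τ ν : ℝ → ℝ)
    (hτ : ∀ s : ℝ, HasDerivAt τ
      ((τ s ^ 2 + h ^ 2) / (τ s ^ 2 + ν s ^ 2 + h ^ 2) * (1 + τ s * ν s)) s)
    (hν : ∀ s : ℝ, HasDerivAt ν
      ((τ s * ν s - τ s ^ 2 * (τ s ^ 2 + h ^ 2)) / (τ s ^ 2 + ν s ^ 2 + h ^ 2)) s) :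
    ∃ a b : ℝ, Tendsto τ atTop (𝓝 a) ∧ Tendsto τ atBot (𝓝 b) := by
  have hsol : IsHelicoidalProfile h τ ν := ⟨hτ, hν⟩
  obtain ⟨a, ha⟩ := hsol.exists_tendsto_atTop hh.ne'
  obtain ⟨b, hb⟩ := hsol.exists_tendsto_atBot hh.ne'
  exact ⟨a, b, ha, hb⟩
end

section
/- The curvature k(s) tends to 0 as s → +∞ and as s → −∞; moreover k(s) > 0 for all sufficiently large s and k(s) < 0 for all sufficiently negative s. -/
open Filter Topology

/- Context: `h > 0`; `τ, ν : ℝ → ℝ` solve the ODE system of the generating curve of a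
helicoidal surface of pitch `h` rotating with unit angular speed under mean curvature flow:
`τ' = ((τ² + h²)/(τ² + ν² + h²))(1 + τν)`, `ν' = (τν − τ²(τ² + h²))/(τ² + ν² + h²)`,
with `r = √(τ² + ν²)` and signed curvature `k = (τ(τ² + h²) − ν)/(r² + h²)`. -/

/-!
In terms of `k` the system is the Frenet system `τ' = 1 + kν`, `ν' = -kτ` of a plane curve, so
`(τ² + ν²)' = 2τ`. It suffices to treat `s → +∞`, since `(τ, ν, k)(s) ↦ -(τ, ν, k)(-s)` is a
symmetry.

The regions `τ > 0` and `τ > 0, τν < -1` are forward invariant, and every solution enters them.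
If `τ ≤ 0` on a half-line, then `τ² + ν² ≤ R²` there and `τ - (R/2)(τ² + ν²)` grows at least
linearly although it is nonpositive. If `τ > 0` and `τν ≥ -1` on a half-line, then `τ` increases,
`ν` stays bounded, and `ν + 1/τ` decreases at least linearly although it is nonnegative.

In the last region `k > 0` and `τ` decreases, while `u = -ν` satisfies `u²(u² + h²)u' ≥ h²`, so that
`ν → -∞`. Since `τ` is bounded, `k = O(1/|ν|)`.
-/

open Set

lemma add_inv_nonneg_of_one_add_mul_nonneg {x y : ℝ} (hx : 0 < x) (hxy : 0 ≤ 1 + x * y) :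
    0 ≤ y + x⁻¹ := by
  have sum_eq : y + x⁻¹ = (1 + x * y) / x := by
    field_simp
    ring
  exact sum_eq ▸ div_nonneg hxy hx.le

section RealAnalysis

variable {f f' : ℝ → ℝ}

lemma tendsto_atTop_of_eventually_le_hasDerivAt {c : ℝ} (hc : 0 < c)
    (hf : ∀ᶠ s in atTop, HasDerivAt f (f' s) s) (hf' : ∀ᶠ s in atTop, c ≤ f' s) :
    Tendsto f atTop atTop := by
  obtain ⟨a, ha⟩ := eventually_atTop.1 (hf.and hf')
  have growth : ∀ s ≥ a, c * (s - a) ≤ f s - f a := fun s hs ↦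
    (convex_Ici a).mul_sub_le_image_sub_of_le_deriv
      (HasDerivAt.continuousOn fun x hx ↦ (ha x hx).1)
      (fun x hx ↦ (ha x (interior_subset hx)).1.differentiableAt.differentiableWithinAt)
      (fun x hx ↦ (ha x (interior_subset hx)).1.deriv ▸ (ha x (interior_subset hx)).2)
      a self_mem_Ici s hs hs
  have linear : Tendsto (fun s ↦ f a + c * (s - a)) atTop atTop :=
    tendsto_atTop_add_const_left _ _
      ((tendsto_atTop_add_const_right _ (-a) tendsto_id).const_mul_atTop hc)
  refine tendsto_atTop_mono' _ ?_ linear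
  filter_upwards [eventually_ge_atTop a] with s hs
  linarith [growth s hs]

lemma pos_of_hasDerivAt_pos_of_eq_zero {a : ℝ} (hf : ∀ s ≥ a, HasDerivAt f (f' s) s)
    (hzero : ∀ s ≥ a, f s = 0 → 0 < f' s) (ha : 0 < f a) {s : ℝ} (hs : a ≤ s) : 0 < f s := by
  have nonneg : ∀ x ≥ a, 0 ≤ f x := fun x hx ↦ neg_nonpos.1 <|
    image_le_of_deriv_right_lt_deriv_boundary (B := fun _ ↦ 0) (B' := fun _ ↦ 0)
      (HasDerivAt.continuousOn fun y hy ↦ (hf y hy.1).neg)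
      (fun y hy ↦ (hf y hy.1).neg.hasDerivWithinAt) (neg_nonpos.2 ha.le)
      (fun y ↦ hasDerivAt_const y 0)
      (fun y hy hy0 ↦ neg_neg_of_pos (hzero y hy.1 (neg_eq_zero.1 hy0))) (right_mem_Icc.2 hx)
  refine (nonneg s hs).lt_of_ne' fun hs0 ↦ ?_
  have has : a < s := hs.lt_of_ne fun h ↦ ha.ne' (h ▸ hs0)
  have isLocalMin : IsLocalMin f s := by
    filter_upwards [Ioi_mem_nhds has] with x hx
    exact hs0 ▸ nonneg x (mem_Ioi.1 hx).le
  exact (hzero s hs hs0).ne' (isLocalMin.hasDerivAt_eq_zero (hf s hs))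

end RealAnalysis

/-- The signed curvature of the generating curve of a rotating helicoidal surface of pitch `h`, at a
point `X` of the curve with `⟨X, T⟩ = x` and `⟨X, N⟩ = y`. -/
noncomputable def helicoidalCurvature (h x y : ℝ) : ℝ :=
  (x * (x ^ 2 + h ^ 2) - y) / (x ^ 2 + y ^ 2 + h ^ 2)

section Curvature

variable {h x y : ℝ}

lemma helicoidalCurvature_neg_neg (h x y : ℝ) :
    helicoidalCurvature h (-x) (-y) = -helicoidalCurvature h x y := by
  rw [helicoidalCurvature, helicoidalCurvature, ← neg_div]
  congr 1 <;> ring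

lemma helicoidalCurvature_pos (hx : 0 < x) (hy : y < 0) : 0 < helicoidalCurvature h x y := by
  have : 0 < x * (x ^ 2 + h ^ 2) := by positivity
  exact div_pos (by linarith) (by positivity)

lemma helicoidalCurvature_le {c : ℝ} (hx : 0 < x) (hxc : x ≤ c) (hy : y < 0) :
    helicoidalCurvature h x y ≤ c * (c ^ 2 + h ^ 2) * (y⁻¹ * y⁻¹) - y⁻¹ :=
  calc helicoidalCurvature h x y
      ≤ (c * (c ^ 2 + h ^ 2) - y) / y ^ 2 := by
        have c_nonneg : 0 ≤ c := hx.le.trans hxc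
        have : 0 ≤ c * (c ^ 2 + h ^ 2) := by positivity
        have sq_le : y ^ 2 ≤ x ^ 2 + y ^ 2 + h ^ 2 := by linarith [sq_nonneg x, sq_nonneg h]
        unfold helicoidalCurvature
        gcongr
        · linarith
        · exact sq_pos_of_neg hy
    _ = c * (c ^ 2 + h ^ 2) * (y⁻¹ * y⁻¹) - y⁻¹ := by field_simp [hy.ne]

lemma one_add_helicoidalCurvature_mul (hh : h ≠ 0) (x y : ℝ) :
    1 + helicoidalCurvature h x y * y =
      (x ^ 2 + h ^ 2) / (x ^ 2 + y ^ 2 + h ^ 2) * (1 + x * y) := by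
  unfold helicoidalCurvature
  field_simp
  ring

lemma helicoidalCurvature_mul (h x y : ℝ) :
    helicoidalCurvature h x y * x =
      x ^ 2 * ((x ^ 2 + h ^ 2) / (x ^ 2 + y ^ 2 + h ^ 2)) - x * y / (x ^ 2 + y ^ 2 + h ^ 2) := by
  unfold helicoidalCurvature
  ring

lemma sq_div_sq_add_sq_le (hh : h ≠ 0) (x y : ℝ) :
    h ^ 2 / (y ^ 2 + h ^ 2) ≤ (x ^ 2 + h ^ 2) / (x ^ 2 + y ^ 2 + h ^ 2) := by
  rw [div_le_div_iff₀ (by positivity) (by positivity)]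
  nlinarith [mul_nonneg (sq_nonneg x) (sq_nonneg y)]

lemma le_one_add_helicoidalCurvature_mul_sub {R : ℝ} (hh : h ≠ 0) (hR : 0 ≤ R) (hx : x ≤ 0)
    (hy : y ^ 2 ≤ R ^ 2) :
    h ^ 2 / (R ^ 2 + h ^ 2) ≤ 1 + helicoidalCurvature h x y * y - R * x := by
  rw [one_add_helicoidalCurvature_mul hh]
  set q := (x ^ 2 + h ^ 2) / (x ^ 2 + y ^ 2 + h ^ 2)
  have q_le_one : q ≤ 1 := div_le_one_of_le₀ (by linarith [sq_nonneg y]) (by positivity)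
  have Rx_nonpos : R * x ≤ 0 := mul_nonpos_of_nonneg_of_nonpos hR hx
  have Rx_le : R * x ≤ x * y := by
    rw [mul_comm]
    exact mul_le_mul_of_nonpos_left (le_of_abs_le (abs_le_of_sq_le_sq hy hR)) hx
  calc h ^ 2 / (R ^ 2 + h ^ 2)
      ≤ h ^ 2 / (y ^ 2 + h ^ 2) := by gcongr h ^ 2 / (?_ + h ^ 2)
    _ ≤ q := sq_div_sq_add_sq_le hh x y
    _ ≤ q - (1 - q) * (R * x) := by nlinarith
    _ = q * (1 + R * x) - R * x := by ring
    _ ≤ q * (1 + x * y) - R * x := by gcongr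

lemma sq_le_mul_helicoidalCurvature_mul (hh : h ≠ 0) (hxy : 1 + x * y ≤ 0) :
    h ^ 2 ≤ y ^ 2 * (y ^ 2 + h ^ 2) * (helicoidalCurvature h x y * x) := by
  have one_le : 1 ≤ y ^ 2 * x ^ 2 := by nlinarith
  have div_nonpos : x * y / (x ^ 2 + y ^ 2 + h ^ 2) ≤ 0 :=
    div_nonpos_of_nonpos_of_nonneg (by linarith) (by positivity)
  calc h ^ 2
      ≤ y ^ 2 * x ^ 2 * h ^ 2 := le_mul_of_one_le_left (sq_nonneg h) one_le
    _ = y ^ 2 * (y ^ 2 + h ^ 2) * (x ^ 2 * (h ^ 2 / (y ^ 2 + h ^ 2))) := by field_simp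
    _ ≤ y ^ 2 * (y ^ 2 + h ^ 2) * (x ^ 2 * ((x ^ 2 + h ^ 2) / (x ^ 2 + y ^ 2 + h ^ 2))) := by
        gcongr y ^ 2 * (y ^ 2 + h ^ 2) * (x ^ 2 * ?_)
        exact sq_div_sq_add_sq_le hh x y
    _ ≤ y ^ 2 * (y ^ 2 + h ^ 2) * (helicoidalCurvature h x y * x) := by
        rw [helicoidalCurvature_mul]
        gcongr
        linarith

end Curvature

/-- `τ = ⟨X, T⟩` and `ν = ⟨X, N⟩` are the tangential and normal components of a curve `X`,
parametrized by arc length on all of `ℝ`, that generates a helicoidal surface of pitch `h` rotating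
with unit angular speed under mean curvature flow. The system is encoded as the Frenet equations
`τ' = 1 + kν`, `ν' = -kτ`. -/
structure IsHelicoidalRotator (h : ℝ) (τ ν : ℝ → ℝ) : Prop where
  hasDerivAt_tangential (s : ℝ) :
    HasDerivAt τ (1 + helicoidalCurvature h (τ s) (ν s) * ν s) s
  hasDerivAt_normal (s : ℝ) :
    HasDerivAt ν (-(helicoidalCurvature h (τ s) (ν s) * τ s)) s

namespace IsHelicoidalRotator

variable {h a s : ℝ} {τ ν : ℝ → ℝ}

lemma neg_comp_neg (H : IsHelicoidalRotator h τ ν) :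
    IsHelicoidalRotator h (fun s ↦ -τ (-s)) (fun s ↦ -ν (-s)) where
  hasDerivAt_tangential s :=
    ((H.hasDerivAt_tangential (-s)).scomp s (hasDerivAt_neg s)).neg.congr_deriv <| by
      simp [helicoidalCurvature_neg_neg]
  hasDerivAt_normal s :=
    ((H.hasDerivAt_normal (-s)).scomp s (hasDerivAt_neg s)).neg.congr_deriv <| by
      simp [helicoidalCurvature_neg_neg]

lemma hasDerivAt_sq_add_sq (H : IsHelicoidalRotator h τ ν) (s : ℝ) :
    HasDerivAt (fun s ↦ τ s ^ 2 + ν s ^ 2) (2 * τ s) s :=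
  (((H.hasDerivAt_tangential s).pow 2).add ((H.hasDerivAt_normal s).pow 2)).congr_deriv <| by
    push_cast
    ring

lemma exists_tangential_pos (H : IsHelicoidalRotator h τ ν) (hh : h ≠ 0) : ∃ a, 0 < τ a := by
  by_contra! hτ
  obtain ⟨R, hR, hR₀⟩ : ∃ R, R ^ 2 = τ 0 ^ 2 + ν 0 ^ 2 ∧ 0 ≤ R :=
    ⟨√(τ 0 ^ 2 + ν 0 ^ 2), Real.sq_sqrt (by positivity), Real.sqrt_nonneg _⟩
  have radius_antitone : Antitone (fun s ↦ τ s ^ 2 + ν s ^ 2) :=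
    antitone_of_hasDerivAt_nonpos H.hasDerivAt_sq_add_sq
      fun s ↦ mul_nonpos_of_nonneg_of_nonpos zero_le_two (hτ s)
  have normal_sq_le : ∀ s ≥ 0, ν s ^ 2 ≤ R ^ 2 := fun s hs ↦ by
    linarith [radius_antitone hs, sq_nonneg (τ s)]
  have unbounded : Tendsto (fun s ↦ τ s - R / 2 * (τ s ^ 2 + ν s ^ 2)) atTop atTop := by
    refine tendsto_atTop_of_eventually_le_hasDerivAt (c := h ^ 2 / (R ^ 2 + h ^ 2))
      (by positivity) (.of_forall fun s ↦
        (H.hasDerivAt_tangential s).sub ((H.hasDerivAt_sq_add_sq s).const_mul (R / 2))) ?_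
    filter_upwards [eventually_ge_atTop 0] with s hs
    linarith [le_one_add_helicoidalCurvature_mul_sub hh hR₀ (hτ s) (normal_sq_le s hs)]
  obtain ⟨s, hs⟩ := (unbounded.eventually_gt_atTop 0).exists
  have : 0 ≤ R / 2 * (τ s ^ 2 + ν s ^ 2) := by positivity
  linarith [hτ s]

lemma tangential_pos (H : IsHelicoidalRotator h τ ν) (hh : h ≠ 0) (ha : 0 < τ a) (hs : a ≤ s) :
    0 < τ s := by
  refine pos_of_hasDerivAt_pos_of_eq_zero (fun x _ ↦ H.hasDerivAt_tangential x) ?_ ha hs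
  intro x _ hx
  rw [one_add_helicoidalCurvature_mul hh, hx, zero_mul, add_zero, mul_one]
  positivity

lemma hasDerivAt_normal_add_inv (H : IsHelicoidalRotator h τ ν) (hh : h ≠ 0) (hs : τ s ≠ 0) :
    HasDerivAt (fun s ↦ ν s + (τ s)⁻¹)
      (-(τ s ^ 2 * ((τ s ^ 2 + h ^ 2) / (τ s ^ 2 + ν s ^ 2 + h ^ 2)) +
        (1 + h ^ 2 * (1 + τ s * ν s) / τ s ^ 2) / (τ s ^ 2 + ν s ^ 2 + h ^ 2))) s :=
  ((H.hasDerivAt_normal s).add ((H.hasDerivAt_tangential s).inv hs)).congr_deriv <| by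
    rw [helicoidalCurvature_mul, one_add_helicoidalCurvature_mul hh]
    field_simp
    ring

lemma monotoneOn_tangential_of_one_add_mul_nonneg (H : IsHelicoidalRotator h τ ν) (hh : h ≠ 0)
    (hτν : ∀ s ≥ a, 0 ≤ 1 + τ s * ν s) : MonotoneOn τ (Ici a) :=
  monotoneOn_of_hasDerivWithinAt_nonneg (convex_Ici a)
    (HasDerivAt.continuousOn fun s _ ↦ H.hasDerivAt_tangential s)
    (fun s _ ↦ (H.hasDerivAt_tangential s).hasDerivWithinAt) fun s hs ↦ by
      rw [one_add_helicoidalCurvature_mul hh]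
      exact mul_nonneg (by positivity) (hτν s (interior_subset hs))

lemma antitoneOn_tangential_of_one_add_mul_nonpos (H : IsHelicoidalRotator h τ ν) (hh : h ≠ 0)
    (hτν : ∀ s ≥ a, 1 + τ s * ν s ≤ 0) : AntitoneOn τ (Ici a) :=
  antitoneOn_of_hasDerivWithinAt_nonpos (convex_Ici a)
    (HasDerivAt.continuousOn fun s _ ↦ H.hasDerivAt_tangential s)
    (fun s _ ↦ (H.hasDerivAt_tangential s).hasDerivWithinAt) fun s hs ↦ by
      rw [one_add_helicoidalCurvature_mul hh]
      exact mul_nonpos_of_nonneg_of_nonpos (by positivity) (hτν s (interior_subset hs))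

lemma antitoneOn_normal_add_inv (H : IsHelicoidalRotator h τ ν) (hh : h ≠ 0)
    (ha : 0 < τ a) (hτν : ∀ s ≥ a, 0 ≤ 1 + τ s * ν s) :
    AntitoneOn (fun s ↦ ν s + (τ s)⁻¹) (Ici a) := by
  have hasDeriv (s) (hs : s ∈ Ici a) :=
    H.hasDerivAt_normal_add_inv hh (H.tangential_pos hh ha hs).ne'
  refine antitoneOn_of_hasDerivWithinAt_nonpos (convex_Ici a) (HasDerivAt.continuousOn hasDeriv)
    (fun s hs ↦ (hasDeriv s (interior_subset hs)).hasDerivWithinAt) fun s hs ↦ ?_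
  have := hτν s (interior_subset hs)
  exact neg_nonpos.2 (by positivity)

lemma exists_normal_sq_le (H : IsHelicoidalRotator h τ ν) (hh : h ≠ 0)
    (ha : 0 < τ a) (hτν : ∀ s ≥ a, 0 ≤ 1 + τ s * ν s) : ∃ M, ∀ s ≥ a, ν s ^ 2 ≤ M := by
  refine ⟨(|ν a| + (τ a)⁻¹) ^ 2, fun s hs ↦ ?_⟩
  have hτs : 0 < τ s := H.tangential_pos hh ha hs
  have inv_le : (τ s)⁻¹ ≤ (τ a)⁻¹ :=
    inv_anti₀ ha (H.monotoneOn_tangential_of_one_add_mul_nonneg hh hτν self_mem_Ici hs hs)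
  have sum_le : ν s + (τ s)⁻¹ ≤ ν a + (τ a)⁻¹ :=
    H.antitoneOn_normal_add_inv hh ha hτν self_mem_Ici hs hs
  apply sq_le_sq'
  · linarith [add_inv_nonneg_of_one_add_mul_nonneg hτs (hτν s hs), abs_nonneg (ν a)]
  · linarith [inv_pos.2 hτs, le_abs_self (ν a)]

lemma exists_one_add_mul_neg (H : IsHelicoidalRotator h τ ν) (hh : h ≠ 0) (ha : 0 < τ a) :
    ∃ b ≥ a, 1 + τ b * ν b < 0 := by
  by_contra! hτν
  have hτ (s) (hs : a ≤ s) : 0 < τ s := H.tangential_pos hh ha hs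
  obtain ⟨M, hM⟩ := H.exists_normal_sq_le hh ha hτν
  have M_nonneg : 0 ≤ M := (sq_nonneg _).trans (hM a le_rfl)
  have deriv_ge (s) (hs : a ≤ s) : τ a ^ 2 * (h ^ 2 / (M + h ^ 2)) ≤
      τ s ^ 2 * ((τ s ^ 2 + h ^ 2) / (τ s ^ 2 + ν s ^ 2 + h ^ 2)) +
        (1 + h ^ 2 * (1 + τ s * ν s) / τ s ^ 2) / (τ s ^ 2 + ν s ^ 2 + h ^ 2) := by
    have tangential_le : τ a ≤ τ s :=
      H.monotoneOn_tangential_of_one_add_mul_nonneg hh hτν self_mem_Ici hs hs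
    have normal_sq_le := hM s hs
    have one_add_mul_nonneg := hτν s hs
    calc τ a ^ 2 * (h ^ 2 / (M + h ^ 2))
        ≤ τ s ^ 2 * (h ^ 2 / (ν s ^ 2 + h ^ 2)) := by gcongr
      _ ≤ τ s ^ 2 * ((τ s ^ 2 + h ^ 2) / (τ s ^ 2 + ν s ^ 2 + h ^ 2)) := by
          gcongr τ s ^ 2 * ?_
          exact sq_div_sq_add_sq_le hh _ _
      _ ≤ _ := le_add_of_nonneg_right (by positivity)
  have unbounded : Tendsto (fun s ↦ -(ν s + (τ s)⁻¹)) atTop atTop := by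
    refine tendsto_atTop_of_eventually_le_hasDerivAt (c := τ a ^ 2 * (h ^ 2 / (M + h ^ 2)))
      (by positivity) (eventually_atTop.2 ⟨a, fun s hs ↦
        (H.hasDerivAt_normal_add_inv hh (hτ s hs).ne').fun_neg⟩) ?_
    simpa only [neg_neg] using eventually_atTop.2 ⟨a, deriv_ge⟩
  obtain ⟨s, hpos, hs⟩ := ((unbounded.eventually_gt_atTop 0).and (eventually_ge_atTop a)).exists
  linarith [add_inv_nonneg_of_one_add_mul_nonneg (hτ s hs) (hτν s hs)]

lemma one_add_mul_neg (H : IsHelicoidalRotator h τ ν) (hh : h ≠ 0) (ha : 0 < τ a)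
    (haν : 1 + τ a * ν a < 0) (hs : a ≤ s) : 1 + τ s * ν s < 0 := by
  refine neg_pos.1 (pos_of_hasDerivAt_pos_of_eq_zero (fun x _ ↦
    (((H.hasDerivAt_tangential x).mul (H.hasDerivAt_normal x)).const_add 1).neg) ?_
    (neg_pos.2 haν) hs)
  intro x hx hx0
  have hx0 : 1 + τ x * ν x = 0 := neg_eq_zero.1 hx0
  have hτx : 0 < τ x := H.tangential_pos hh ha hx
  have hνx : ν x < 0 := neg_of_mul_neg_right (by linarith) hτx.le
  have curvature_pos := helicoidalCurvature_pos (h := h) hτx hνx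
  rw [one_add_helicoidalCurvature_mul hh, hx0, mul_zero, zero_mul, zero_add, mul_neg, neg_neg]
  positivity

lemma eventually_pos_and_one_add_mul_neg (H : IsHelicoidalRotator h τ ν) (hh : h ≠ 0) :
    ∀ᶠ s in atTop, 0 < τ s ∧ 1 + τ s * ν s < 0 := by
  obtain ⟨a, ha⟩ := H.exists_tangential_pos hh
  obtain ⟨b, hab, hb⟩ := H.exists_one_add_mul_neg hh ha
  have hτb : 0 < τ b := H.tangential_pos hh ha hab
  filter_upwards [eventually_ge_atTop b] with s hs
  exact ⟨H.tangential_pos hh hτb hs, H.one_add_mul_neg hh hτb hb hs⟩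

lemma eventually_normal_neg (H : IsHelicoidalRotator h τ ν) (hh : h ≠ 0) :
    ∀ᶠ s in atTop, ν s < 0 := by
  filter_upwards [H.eventually_pos_and_one_add_mul_neg hh] with s ⟨hτ, hτν⟩
  exact neg_of_mul_neg_right (by linarith) hτ.le

lemma exists_eventually_tangential_le (H : IsHelicoidalRotator h τ ν) (hh : h ≠ 0) :
    ∃ c, ∀ᶠ s in atTop, τ s ≤ c := by
  obtain ⟨b, hb⟩ := eventually_atTop.1 (H.eventually_pos_and_one_add_mul_neg hh)
  have antitoneOn : AntitoneOn τ (Ici b) :=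
    H.antitoneOn_tangential_of_one_add_mul_nonpos hh fun s hs ↦ (hb s hs).2.le
  exact ⟨τ b, eventually_atTop.2 ⟨b, fun s hs ↦ antitoneOn self_mem_Ici hs hs⟩⟩

lemma tendsto_normal_atBot (H : IsHelicoidalRotator h τ ν) (hh : h ≠ 0) :
    Tendsto ν atTop atBot := by
  -- Since `u = -ν` satisfies `u ^ 2 * (u ^ 2 + h ^ 2) * u' ≥ h ^ 2`, the primitive `G` of
  -- `u ^ 2 * (u ^ 2 + h ^ 2)` grows at least linearly along `u`.
  let G : ℝ → ℝ := fun u ↦ u ^ 5 / 5 + h ^ 2 * (u ^ 3 / 3)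
  have G_mono : Monotone G := fun u v huv ↦ by
    have pow_five_le : u ^ 5 ≤ v ^ 5 := (Odd.strictMono_pow (by decide)).monotone huv
    have pow_three_le : u ^ 3 ≤ v ^ 3 := (Odd.strictMono_pow (by decide)).monotone huv
    simp only [G]
    gcongr
  have hasDerivAt_G (u : ℝ) : HasDerivAt G (u ^ 2 * (u ^ 2 + h ^ 2)) u :=
    (((hasDerivAt_pow 5 u).div_const 5).add
      (((hasDerivAt_pow 3 u).div_const 3).const_mul (h ^ 2))).congr_deriv (by push_cast; ring)
  have G_tendsto : Tendsto (G ∘ fun s ↦ -ν s) atTop atTop := by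
    refine tendsto_atTop_of_eventually_le_hasDerivAt (c := h ^ 2) (by positivity)
      (.of_forall fun s ↦ (hasDerivAt_G (-ν s)).comp s (H.hasDerivAt_normal s).fun_neg) ?_
    filter_upwards [H.eventually_pos_and_one_add_mul_neg hh] with s ⟨_, hτν⟩
    rw [neg_neg, neg_sq]
    exact sq_le_mul_helicoidalCurvature_mul hh hτν.le
  rw [← tendsto_neg_atTop_iff, tendsto_atTop]
  intro M
  filter_upwards [G_tendsto.eventually_gt_atTop (G M)] with s hs
  exact (G_mono.reflect_lt hs).le

lemma eventually_curvature_pos (H : IsHelicoidalRotator h τ ν) (hh : h ≠ 0) :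
    ∀ᶠ s in atTop, 0 < helicoidalCurvature h (τ s) (ν s) := by
  filter_upwards [H.eventually_pos_and_one_add_mul_neg hh, H.eventually_normal_neg hh]
    with s ⟨hτ, _⟩ hν
  exact helicoidalCurvature_pos hτ hν

lemma tendsto_curvature_atTop (H : IsHelicoidalRotator h τ ν) (hh : h ≠ 0) :
    Tendsto (fun s ↦ helicoidalCurvature h (τ s) (ν s)) atTop (𝓝 0) := by
  obtain ⟨c, hc⟩ := H.exists_eventually_tangential_le hh
  have inv_tendsto : Tendsto (fun s ↦ (ν s)⁻¹) atTop (𝓝 0) :=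
    tendsto_inv_atBot_zero.comp (H.tendsto_normal_atBot hh)
  have bound_tendsto :
      Tendsto (fun s ↦ c * (c ^ 2 + h ^ 2) * ((ν s)⁻¹ * (ν s)⁻¹) - (ν s)⁻¹) atTop (𝓝 0) := by
    simpa using ((inv_tendsto.mul inv_tendsto).const_mul (c * (c ^ 2 + h ^ 2))).sub inv_tendsto
  refine squeeze_zero' ?_ ?_ bound_tendsto
  · exact (H.eventually_curvature_pos hh).mono fun s hs ↦ hs.le
  · filter_upwards [H.eventually_pos_and_one_add_mul_neg hh, H.eventually_normal_neg hh, hc]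
      with s ⟨hτ, _⟩ hν hτc
    exact helicoidalCurvature_le hτ hτc hν

lemma eventually_curvature_neg (H : IsHelicoidalRotator h τ ν) (hh : h ≠ 0) :
    ∀ᶠ s in atBot, helicoidalCurvature h (τ s) (ν s) < 0 := by
  simpa [helicoidalCurvature_neg_neg] using
    tendsto_neg_atBot_atTop.eventually (H.neg_comp_neg.eventually_curvature_pos hh)

lemma tendsto_curvature_atBot (H : IsHelicoidalRotator h τ ν) (hh : h ≠ 0) :
    Tendsto (fun s ↦ helicoidalCurvature h (τ s) (ν s)) atBot (𝓝 0) := by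
  simpa [helicoidalCurvature_neg_neg, Function.comp_def] using
    ((H.neg_comp_neg.tendsto_curvature_atTop hh).comp tendsto_neg_atBot_atTop).neg

end IsHelicoidalRotator

/-- Lemma 4.6. The curvature `k → 0` in each direction; moreover
`k > 0` for all sufficiently large `s` and `k < 0` for all sufficiently negative `s`. -/
theorem curvature_tendsto_zero
    (h : ℝ) (hh : 0 < h) (τ ν : ℝ → ℝ)
    (hτ : ∀ s : ℝ, HasDerivAt τ
      ((τ s ^ 2 + h ^ 2) / (τ s ^ 2 + ν s ^ 2 + h ^ 2) * (1 + τ s * ν s)) s)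
    (hν : ∀ s : ℝ, HasDerivAt ν
      ((τ s * ν s - τ s ^ 2 * (τ s ^ 2 + h ^ 2)) / (τ s ^ 2 + ν s ^ 2 + h ^ 2)) s)
    (k : ℝ → ℝ)
    (hk : ∀ s : ℝ, k s = (τ s * (τ s ^ 2 + h ^ 2) - ν s) / (τ s ^ 2 + ν s ^ 2 + h ^ 2)) :
    Tendsto k atTop (𝓝 0) ∧ Tendsto k atBot (𝓝 0) ∧
    (∀ᶠ s in atTop, 0 < k s) ∧ (∀ᶠ s in atBot, k s < 0) := by
  have H : IsHelicoidalRotator h τ ν :=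
    ⟨fun s ↦ (hτ s).congr_deriv (one_add_helicoidalCurvature_mul hh.ne' _ _).symm,
      fun s ↦ (hν s).congr_deriv (by rw [helicoidalCurvature_mul]; ring)⟩
  obtain rfl : k = fun s ↦ helicoidalCurvature h (τ s) (ν s) := funext hk
  exact ⟨H.tendsto_curvature_atTop hh.ne', H.tendsto_curvature_atBot hh.ne',
    H.eventually_curvature_pos hh.ne', H.eventually_curvature_neg hh.ne'⟩
end

section
/- Each arm of the generating curve spirals infinitely many times around the origin: the function s ↦ ∫₀ˢ (−ν(t)/r(t)²) dt, which gives the change of the polar angle φ of the curve X = r e^{iφ}, tends to +∞ both as s → +∞ and as s → −∞. -/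
open Filter Topology

/- Context: `h > 0`; `τ, ν : ℝ → ℝ` solve the ODE system of the generating curve of a
helicoidal surface of pitch `h` rotating with unit angular speed under mean curvature flow:
`τ' = ((τ² + h²)/(τ² + ν² + h²))(1 + τν)`, `ν' = (τν − τ²(τ² + h²))/(τ² + ν² + h²)`,
with `r = √(τ² + ν²)` and signed curvature `k = (τ(τ² + h²) − ν)/(r² + h²)`. -/

/-!
The function `V = arctan (τ / h) / h - ν` differs from `-ν` by a bounded amount, and the ODE gives
`V' = (1 + τ² (τ² + h²)) / (r² + h²) > 0`. If `V` were bounded above on the forward arm, then `ν`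
would be bounded and `V'` bounded away from zero, a contradiction; so `V → ∞` and `ν → -∞`. Once
`ν ≤ -1`, the ODE pushes `τ²` down whenever `τ² > 2`, so `τ` stays bounded, and `V'` is at most a
constant multiple of `φ' = -ν / r²`. Hence `φ → ∞` along with `V`. The backward arm is the forward
arm of the curve with reversed orientation.
-/

section RealDerivatives

variable {f f' g g' : ℝ → ℝ}

theorem tendsto_atTop_of_hasDerivAt_le
    (hf : ∀ᶠ x in atTop, HasDerivAt f (f' x) x) (hg : ∀ᶠ x in atTop, HasDerivAt g (g' x) x)
    (hle : ∀ᶠ x in atTop, f' x ≤ g' x) (hf_top : Tendsto f atTop atTop) :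
    Tendsto g atTop atTop := by
  obtain ⟨a, ha⟩ := eventually_atTop.1 (hf.and (hg.and hle))
  have hderiv : ∀ x ≥ a, HasDerivAt (fun x => g x - f x) (g' x - f' x) x := fun x hx =>
    (ha x hx).2.1.sub (ha x hx).1
  have hmono : MonotoneOn (fun x => g x - f x) (Set.Ici a) := by
    refine monotoneOn_of_hasDerivWithinAt_nonneg (convex_Ici a)
      (fun x hx => (hderiv x hx).continuousAt.continuousWithinAt)
      (fun x hx => (hderiv x (interior_subset hx)).hasDerivWithinAt) fun x hx => ?_
    exact sub_nonneg.2 (ha x (interior_subset hx)).2.2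
  refine tendsto_atTop_mono' _ ?_ (tendsto_atTop_add_const_right _ (g a - f a) hf_top)
  filter_upwards [eventually_ge_atTop a] with x hx
  linarith [hmono Set.self_mem_Ici hx hx]

theorem tendsto_atTop_of_const_le_hasDerivAt {c : ℝ} (hc : 0 < c)
    (hf : ∀ᶠ x in atTop, HasDerivAt f (f' x) x) (hle : ∀ᶠ x in atTop, c ≤ f' x) :
    Tendsto f atTop atTop :=
  tendsto_atTop_of_hasDerivAt_le (.of_forall fun _ => hasDerivAt_const_mul c) hf hle
    (tendsto_id.const_mul_atTop hc)

theorem exists_eventually_le_of_hasDerivAt_neg {M : ℝ}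
    (hf : ∀ᶠ x in atTop, HasDerivAt f (f' x) x)
    (hneg : ∀ᶠ x in atTop, M < f x → f' x < 0) :
    ∃ A, ∀ᶠ x in atTop, f x ≤ A := by
  obtain ⟨a, ha⟩ := eventually_atTop.1 (hf.and hneg)
  refine ⟨max (f a) (M + 1), eventually_atTop.2 ⟨a, fun x hx => ?_⟩⟩
  refine image_le_of_deriv_right_lt_deriv_boundary (B := fun _ => max (f a) (M + 1))
    (fun y hy => (ha y hy.1).1.continuousAt.continuousWithinAt)
    (fun y hy => (ha y hy.1).1.hasDerivWithinAt) (le_max_left _ _)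
    (fun y => hasDerivAt_const y _) (fun y hy hy_eq => (ha y hy.1).2 ?_) (Set.right_mem_Icc.2 hx)
  rw [hy_eq]
  exact (lt_add_one M).trans_le (le_max_right _ _)

end RealDerivatives

/-- The ODE system satisfied by the support functions `τ = ⟨X, T⟩` and `ν = ⟨X, N⟩` of the
generating curve `X` of a rotating helicoidal surface of pitch `h`. -/
structure IsGeneratingCurve (h : ℝ) (τ ν : ℝ → ℝ) : Prop where
  hasDerivAt_tau (s : ℝ) : HasDerivAt τ
    ((τ s ^ 2 + h ^ 2) / (τ s ^ 2 + ν s ^ 2 + h ^ 2) * (1 + τ s * ν s)) s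
  hasDerivAt_nu (s : ℝ) : HasDerivAt ν
    ((τ s * ν s - τ s ^ 2 * (τ s ^ 2 + h ^ 2)) / (τ s ^ 2 + ν s ^ 2 + h ^ 2)) s

/-- The Lyapunov function `V` of the system, as a function of the point `(t, n) = (τ, ν)` of the
phase plane. -/
noncomputable def lyapunov (h t n : ℝ) : ℝ :=
  Real.arctan (t / h) / h - n

/-- The derivative of `lyapunov` along the flow, at the point `(t, n)` of the phase plane. -/
noncomputable def lyapunovRate (h t n : ℝ) : ℝ :=
  (1 + t ^ 2 * (t ^ 2 + h ^ 2)) / (t ^ 2 + n ^ 2 + h ^ 2)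

theorem abs_lyapunov_add_le (h t n : ℝ) : |lyapunov h t n + n| ≤ Real.pi / 2 / |h| := by
  rw [lyapunov, sub_add_cancel, abs_div]
  gcongr
  exact abs_le.2 ⟨(Real.neg_pi_div_two_lt_arctan _).le, (Real.arctan_lt_pi_div_two _).le⟩

theorem lyapunovRate_nonneg (h t n : ℝ) : 0 ≤ lyapunovRate h t n := by
  unfold lyapunovRate
  positivity

theorem le_lyapunovRate {h t n N : ℝ} (hh : h ≠ 0) (hn : |n| ≤ N) :
    1 / (2 * (N ^ 2 + h ^ 2 + 1)) ≤ lyapunovRate h t n := by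
  have hn_sq : n ^ 2 ≤ N ^ 2 := sq_le_sq.2 (hn.trans (le_abs_self N))
  have hdenom : t ^ 2 + n ^ 2 + h ^ 2 ≤ (N ^ 2 + h ^ 2 + 1) * (t ^ 2 + 1) := by
    nlinarith [mul_nonneg (sq_nonneg N) (sq_nonneg t), mul_nonneg (sq_nonneg h) (sq_nonneg t)]
  have hnum : t ^ 2 + 1 ≤ 2 * (1 + t ^ 2 * (t ^ 2 + h ^ 2)) := by
    nlinarith [sq_nonneg (t ^ 2 - 1), mul_nonneg (sq_nonneg t) (sq_nonneg h), sq_nonneg (t ^ 2)]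
  rw [lyapunovRate, div_le_div_iff₀ (by positivity) (by positivity)]
  calc 1 * (t ^ 2 + n ^ 2 + h ^ 2)
      ≤ (N ^ 2 + h ^ 2 + 1) * (t ^ 2 + 1) := by rwa [one_mul]
    _ ≤ (N ^ 2 + h ^ 2 + 1) * (2 * (1 + t ^ 2 * (t ^ 2 + h ^ 2))) := by gcongr
    _ = (1 + t ^ 2 * (t ^ 2 + h ^ 2)) * (2 * (N ^ 2 + h ^ 2 + 1)) := by ring

theorem lyapunovRate_le {h t n A : ℝ} (hn : n ≤ -1) (ht : t ^ 2 ≤ A) :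
    lyapunovRate h t n ≤ (1 + A * (A + h ^ 2)) * (-n / (t ^ 2 + n ^ 2)) := by
  have hA : 0 ≤ A := (sq_nonneg t).trans ht
  have hr : 0 < t ^ 2 + n ^ 2 := by nlinarith [sq_nonneg t]
  calc lyapunovRate h t n
      ≤ (1 + A * (A + h ^ 2)) / (t ^ 2 + n ^ 2) := by
        refine div_le_div₀ (by positivity) ?_ hr (le_add_of_nonneg_right (sq_nonneg h))
        gcongr
    _ ≤ (1 + A * (A + h ^ 2)) * -n / (t ^ 2 + n ^ 2) := by
        gcongr
        exact le_mul_of_one_le_right (by positivity) (by linarith)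
    _ = (1 + A * (A + h ^ 2)) * (-n / (t ^ 2 + n ^ 2)) := mul_div_assoc _ _ _

namespace IsGeneratingCurve

variable {h : ℝ} {τ ν : ℝ → ℝ}

theorem reverse (hc : IsGeneratingCurve h τ ν) :
    IsGeneratingCurve h (fun s => -τ (-s)) (fun s => -ν (-s)) where
  hasDerivAt_tau s :=
    ((hc.hasDerivAt_tau (-s)).scomp s (hasDerivAt_neg s)).neg.congr_deriv (by simp)
  hasDerivAt_nu s :=
    ((hc.hasDerivAt_nu (-s)).scomp s (hasDerivAt_neg s)).neg.congr_deriv (by simp)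

theorem continuous_tau (hc : IsGeneratingCurve h τ ν) : Continuous τ :=
  continuous_iff_continuousAt.2 fun s => (hc.hasDerivAt_tau s).continuousAt

theorem continuous_nu (hc : IsGeneratingCurve h τ ν) : Continuous ν :=
  continuous_iff_continuousAt.2 fun s => (hc.hasDerivAt_nu s).continuousAt

theorem hasDerivAt_lyapunov (hc : IsGeneratingCurve h τ ν) (hh : h ≠ 0) (s : ℝ) :
    HasDerivAt (fun s => lyapunov h (τ s) (ν s)) (lyapunovRate h (τ s) (ν s)) s := by
  have harctan := (((hc.hasDerivAt_tau s).div_const h).arctan).div_const h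
  refine (harctan.sub (hc.hasDerivAt_nu s)).congr_deriv ?_
  have hsum : 1 + (τ s / h) ^ 2 = (τ s ^ 2 + h ^ 2) / h ^ 2 := by
    field_simp
    ring
  have hτh : τ s ^ 2 + h ^ 2 ≠ 0 := by positivity
  have hD : τ s ^ 2 + ν s ^ 2 + h ^ 2 ≠ 0 := by positivity
  rw [hsum, lyapunovRate]
  field_simp
  ring

theorem tendsto_lyapunov_atTop (hc : IsGeneratingCurve h τ ν) (hh : h ≠ 0) :
    Tendsto (fun s => lyapunov h (τ s) (ν s)) atTop atTop := by
  have hderiv := hc.hasDerivAt_lyapunov hh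
  have hmono : Monotone fun s => lyapunov h (τ s) (ν s) :=
    monotone_of_hasDerivAt_nonneg hderiv fun s => lyapunovRate_nonneg _ _ _
  refine (tendsto_atTop_of_monotone hmono).resolve_right ?_
  rintro ⟨l, hl⟩
  have hν_bdd : ∀ᶠ s in atTop, |ν s| ≤ Real.pi / 2 / |h| + (|l| + 1) := by
    filter_upwards [hl.abs.eventually_le_const (lt_add_one |l|)] with s hs
    calc |ν s| = |(lyapunov h (τ s) (ν s) + ν s) - lyapunov h (τ s) (ν s)| := by ring_nf
      _ ≤ |lyapunov h (τ s) (ν s) + ν s| + |lyapunov h (τ s) (ν s)| := abs_sub _ _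
      _ ≤ Real.pi / 2 / |h| + (|l| + 1) := add_le_add (abs_lyapunov_add_le _ _ _) hs
  refine not_tendsto_nhds_of_tendsto_atTop ?_ l hl
  exact tendsto_atTop_of_const_le_hasDerivAt (by positivity) (.of_forall hderiv)
    (hν_bdd.mono fun s hs => le_lyapunovRate hh hs)

theorem tendsto_nu_atBot (hc : IsGeneratingCurve h τ ν) (hh : h ≠ 0) :
    Tendsto ν atTop atBot := by
  refine tendsto_atBot_mono (fun s => ?_) (tendsto_atBot_add_const_left _ (Real.pi / 2 / |h|)
    (tendsto_neg_atTop_atBot.comp (hc.tendsto_lyapunov_atTop hh)))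
  have := (abs_le.1 (abs_lyapunov_add_le h (τ s) (ν s))).2
  simp only [Function.comp_apply]
  linarith

theorem exists_eventually_tau_sq_le (hc : IsGeneratingCurve h τ ν) (hh : h ≠ 0) :
    ∃ A, ∀ᶠ s in atTop, τ s ^ 2 ≤ A := by
  refine exists_eventually_le_of_hasDerivAt_neg (M := 2)
    (.of_forall fun s => (hc.hasDerivAt_tau s).pow 2) ?_
  filter_upwards [(hc.tendsto_nu_atBot hh).eventually_le_atBot (-1)] with s hν hτ
  have hcoeff : 0 < (τ s ^ 2 + h ^ 2) / (τ s ^ 2 + ν s ^ 2 + h ^ 2) := by positivity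
  have hneg : τ s * (1 + τ s * ν s) < 0 := by nlinarith [sq_nonneg (τ s - 1)]
  calc _ = 2 * ((τ s ^ 2 + h ^ 2) / (τ s ^ 2 + ν s ^ 2 + h ^ 2) * (τ s * (1 + τ s * ν s))) := by
        push_cast
        ring
    _ < 0 := mul_neg_of_pos_of_neg two_pos (mul_neg_of_pos_of_neg hcoeff hneg)

theorem tendsto_polarAngle_atTop (hc : IsGeneratingCurve h τ ν) (hh : h ≠ 0) {φ : ℝ → ℝ}
    (hφ : ∀ᶠ s in atTop, HasDerivAt φ (-ν s / (τ s ^ 2 + ν s ^ 2)) s) :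
    Tendsto φ atTop atTop := by
  obtain ⟨A, hA⟩ := hc.exists_eventually_tau_sq_le hh
  obtain ⟨s, hs⟩ := hA.exists
  have hA_nonneg : 0 ≤ A := (sq_nonneg _).trans hs
  have hC : 0 < 1 + A * (A + h ^ 2) := by positivity
  refine (tendsto_const_mul_atTop_of_pos hC).1 (tendsto_atTop_of_hasDerivAt_le
    (.of_forall (hc.hasDerivAt_lyapunov hh)) (hφ.mono fun s hs => hs.const_mul _) ?_
    (hc.tendsto_lyapunov_atTop hh))
  filter_upwards [hA, (hc.tendsto_nu_atBot hh).eventually_le_atBot (-1)] with s hτ hν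
  exact lyapunovRate_le hν hτ

theorem tendsto_polarAngle_atBot (hc : IsGeneratingCurve h τ ν) (hh : h ≠ 0) {φ : ℝ → ℝ}
    (hφ : ∀ᶠ s in atBot, HasDerivAt φ (-ν s / (τ s ^ 2 + ν s ^ 2)) s) :
    Tendsto φ atBot atTop := by
  have hreverse : Tendsto (fun s => φ (-s)) atTop atTop := by
    refine hc.reverse.tendsto_polarAngle_atTop hh ?_
    filter_upwards [tendsto_neg_atTop_atBot.eventually hφ] with s hs
    exact (hs.scomp s (hasDerivAt_neg s)).congr_deriv (by simp [neg_div])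
  simpa [Function.comp_def] using hreverse.comp tendsto_neg_atBot_atTop

end IsGeneratingCurve

/-- Lemma 4.9. Each arm spirals infinitely many times around the origin:
the change of polar angle `s ↦ ∫₀ˢ (−ν/r²)` tends to `+∞` in both directions.
(It is assumed, as the paper proves, that the curve avoids the origin: `r > 0`.) -/
theorem polar_angle_tendsto_infinity
    (h : ℝ) (hh : 0 < h) (τ ν : ℝ → ℝ)
    (hτ : ∀ s : ℝ, HasDerivAt τ
      ((τ s ^ 2 + h ^ 2) / (τ s ^ 2 + ν s ^ 2 + h ^ 2) * (1 + τ s * ν s)) s)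
    (hν : ∀ s : ℝ, HasDerivAt ν
      ((τ s * ν s - τ s ^ 2 * (τ s ^ 2 + h ^ 2)) / (τ s ^ 2 + ν s ^ 2 + h ^ 2)) s)
    (hpos : ∀ s : ℝ, 0 < τ s ^ 2 + ν s ^ 2) :
    Tendsto (fun s => ∫ t in (0:ℝ)..s, -ν t / (τ t ^ 2 + ν t ^ 2)) atTop atTop ∧
    Tendsto (fun s => ∫ t in (0:ℝ)..s, -ν t / (τ t ^ 2 + ν t ^ 2)) atBot atTop := by
  have hc : IsGeneratingCurve h τ ν := ⟨hτ, hν⟩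
  have hcont : Continuous fun t => -ν t / (τ t ^ 2 + ν t ^ 2) :=
    hc.continuous_nu.neg.div ((hc.continuous_tau.pow 2).add (hc.continuous_nu.pow 2))
      fun t => (hpos t).ne'
  have hφ (s : ℝ) := (hcont.integral_hasStrictDerivAt 0 s).hasDerivAt
  exact ⟨hc.tendsto_polarAngle_atTop hh.ne' (.of_forall hφ),
    hc.tendsto_polarAngle_atBot hh.ne' (.of_forall hφ)⟩
end

section
/- As h → 0⁺, the solutions (τ_h, ν_h) converge to the constant solution (0, A) in the C^k sense, uniformly on compact subsets of ℝ, for every k: for each nonnegative integer k and each compact interval K ⊂ ℝ, sup_{s ∈ K} |τ_h^{(k)}(s) − τ₀^{(k)}(s)| → 0 and sup_{s ∈ K} |ν_h^{(k)}(s) − ν₀^{(k)}(s)| → 0 as h → 0⁺, where (τ₀, ν₀) is the constant function (0, A). -/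
open Filter Topology

/-!
Adjoining the parameter as a third unknown with `h' = 0`, the curves `s ↦ (τ_h s, ν_h s, h)` are
integral curves of one autonomous vector field `V` on `ℝ³`, and `(0, A, 0)` is a zero of `V`.
Near this zero `‖V x‖ ≤ L ‖x - (0, A, 0)‖`, so over a bounded time an integral curve can move away
from it by at most a constant factor; as the starting points tend to it, so do the curves, uniformly
on bounded sets. The `k`-th derivative of a function `G` along an integral curve is `D_V ^ k G`
evaluated on that curve, where `D_V` is differentiation in the direction `V`. Since the constant
curve at the zero is itself an integral curve, continuity of `D_V ^ k G` there upgrades `C⁰` to `Cᵏ`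
convergence.
-/

section IntegralCurve

open Metric Set

variable {E F ι : Type*} [NormedAddCommGroup E] [NormedSpace ℝ E]
  [NormedAddCommGroup F] [NormedSpace ℝ F]

section Growth

variable {γ : ℝ → E} {v : ℝ → E → E} {x₀ : E} {L M r δ T s : ℝ}

-- The fence `δ * exp (M * t)` stays inside the ball where the bound on `v` holds, and it grows
-- strictly faster than the curve wherever they meet; this is what confines the curve to the ball.
lemma dist_le_mul_exp_of_isIntegralCurve (hγ : IsIntegralCurve γ v)
    (hv : ∀ t, ∀ x ∈ closedBall x₀ r, ‖v t x‖ ≤ L * dist x x₀) (hLM : L < M) (hM : 0 ≤ M)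
    (hδ : 0 < δ) (hγ0 : dist (γ 0) x₀ ≤ δ) (hr : δ * Real.exp (M * T) ≤ r) (hs : s ∈ Icc 0 T) :
    dist (γ s) x₀ ≤ δ * Real.exp (M * s) := by
  have hfence (t : ℝ) :
      HasDerivAt (fun u ↦ δ * Real.exp (M * u)) (M * (δ * Real.exp (M * t))) t :=
    (((hasDerivAt_id t).const_mul M).exp.const_mul δ).congr_deriv (by simp only [id]; ring)
  rw [dist_eq_norm]
  refine image_norm_le_of_norm_deriv_right_lt_deriv_boundary (f := fun t ↦ γ t - x₀)
    (hγ.continuous.sub continuous_const).continuousOn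
    (fun t _ ↦ ((hγ t).sub_const x₀).hasDerivWithinAt) (by simpa [dist_eq_norm] using hγ0)
    hfence (fun t ht hmeet ↦ ?_) hs
  rw [← dist_eq_norm] at hmeet
  have hmem : γ t ∈ closedBall x₀ r := by
    rw [mem_closedBall, hmeet]
    exact le_trans (by gcongr; exact ht.2.le) hr
  calc ‖v t (γ t)‖ ≤ L * dist (γ t) x₀ := hv t _ hmem
    _ = L * (δ * Real.exp (M * t)) := by rw [hmeet]
    _ < M * (δ * Real.exp (M * t)) := by gcongr

lemma dist_le_mul_exp_abs_of_isIntegralCurve (hγ : IsIntegralCurve γ v)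
    (hv : ∀ t, ∀ x ∈ closedBall x₀ r, ‖v t x‖ ≤ L * dist x x₀) (hLM : L < M) (hM : 0 ≤ M)
    (hδ : 0 < δ) (hγ0 : dist (γ 0) x₀ ≤ δ) (hr : δ * Real.exp (M * T) ≤ r) (hs : |s| ≤ T) :
    dist (γ s) x₀ ≤ δ * Real.exp (M * |s|) := by
  rcases le_total 0 s with hs0 | hs0
  · rw [abs_of_nonneg hs0] at hs ⊢
    exact dist_le_mul_exp_of_isIntegralCurve hγ hv hLM hM hδ hγ0 hr ⟨hs0, hs⟩
  · rw [abs_of_nonpos hs0] at hs ⊢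
    have hreverse := dist_le_mul_exp_of_isIntegralCurve (hγ.comp_mul (-1))
      (fun t x hx ↦ by simpa using hv (t * -1) x hx) hLM hM hδ (by simpa using hγ0) hr
      ⟨neg_nonneg.2 hs0, hs⟩
    simpa using hreverse

end Growth

section Along

variable {V : E → E} {G : E → F} {γ : ℝ → E} {x : E}

/-- The derivative `D_V G` of a function `G` in the direction of the vector field `V`, that is, the
Lie derivative of `G` along `V`. Iterating it computes the higher derivatives of `G` along the
integral curves of `V`. -/
noncomputable def derivAlong (V : E → E) (G : E → F) (x : E) : F :=
  fderiv ℝ G x (V x)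

lemma contDiffAt_derivAlong {m : WithTop ℕ∞} (hV : ContDiffAt ℝ m V x)
    (hG : ContDiffAt ℝ (m + 1) G x) : ContDiffAt ℝ m (derivAlong V G) x :=
  hG.fderiv_right_succ.clm_apply hV

lemma contDiffAt_iterate_derivAlong {m n k : ℕ} (hV : ContDiffAt ℝ n V x)
    (hG : ContDiffAt ℝ (m + k : ℕ) G x) (hmk : m + k ≤ n + 1) :
    ContDiffAt ℝ m ((derivAlong V)^[k] G) x := by
  induction k generalizing G with
  | zero => exact hG
  | succ k ih =>
    have hVmk : ContDiffAt ℝ (m + k : ℕ) V x := hV.of_le (by exact_mod_cast (by omega))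
    exact ih (contDiffAt_derivAlong hVmk (by exact_mod_cast hG)) (by omega)

lemma deriv_comp_of_isIntegralCurve {s : ℝ} (hγ : IsIntegralCurve γ fun _ ↦ V)
    (hG : DifferentiableAt ℝ G (γ s)) : deriv (G ∘ γ) s = derivAlong V G (γ s) :=
  (hG.hasFDerivAt.comp_hasDerivAt s (hγ s)).deriv

lemma iteratedDeriv_comp_of_isIntegralCurve {n k : ℕ} {s : ℝ} (hγ : IsIntegralCurve γ fun _ ↦ V)
    (hV : ContDiffAt ℝ n V (γ s)) (hG : ContDiffAt ℝ k G (γ s)) (hk : k ≤ n + 1) :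
    iteratedDeriv k (G ∘ γ) s = (derivAlong V)^[k] G (γ s) := by
  induction k generalizing G with
  | zero => simp
  | succ k ih =>
    have hderiv : deriv (G ∘ γ) =ᶠ[𝓝 s] derivAlong V G ∘ γ := by
      filter_upwards [hγ.continuous.continuousAt.eventually (hG.eventually (by simp))] with t ht
      exact deriv_comp_of_isIntegralCurve hγ (ht.differentiableAt (by simp))
    rw [iteratedDeriv_succ', hderiv.iteratedDeriv_eq, Function.iterate_succ_apply]
    have hVk : ContDiffAt ℝ k V (γ s) := hV.of_le (by exact_mod_cast (by omega))
    exact ih (contDiffAt_derivAlong hVk (by exact_mod_cast hG)) (by omega)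

end Along

section Convergence

variable {V : E → E} {γ : ι → ℝ → E} {l : Filter ι} {x₀ : E} {K : Set ℝ}

lemma tendstoUniformlyOn_of_isIntegralCurve (hV : DifferentiableAt ℝ V x₀) (hV0 : V x₀ = 0)
    (hγ : ∀ᶠ i in l, IsIntegralCurve (γ i) fun _ ↦ V)
    (hγ0 : Tendsto (fun i ↦ γ i 0) l (𝓝 x₀)) (hK : Bornology.IsBounded K) :
    TendstoUniformlyOn γ (fun _ ↦ x₀) l K := by
  obtain ⟨T, hT⟩ := hK.exists_norm_le
  obtain ⟨L, hL, hbound⟩ := hV.isBigO_sub.exists_pos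
  obtain ⟨ρ, hρ, hball⟩ := nhds_basis_closedBall.eventually_iff.1 hbound.bound
  rw [tendstoUniformlyOn_iff]
  intro ε hε
  obtain ⟨r, hr, hrmin⟩ := exists_between (lt_min hρ hε)
  have hrρ : r ≤ ρ := hrmin.le.trans (min_le_left _ _)
  have hrε : r < ε := hrmin.trans_le (min_le_right _ _)
  have hfield : ∀ x ∈ closedBall x₀ r, ‖V x‖ ≤ L * dist x x₀ := fun x hx ↦ by
    simpa [hV0, dist_eq_norm] using hball (closedBall_subset_closedBall hrρ hx)
  set δ := r / Real.exp ((L + 1) * T)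
  have hδr : δ * Real.exp ((L + 1) * T) = r := div_mul_cancel₀ _ (Real.exp_pos _).ne'
  have hδ0 : 0 < δ := by positivity
  filter_upwards [hγ, hγ0.eventually (closedBall_mem_nhds x₀ hδ0)] with i hi hi0 s hs
  rw [dist_comm]
  calc dist (γ i s) x₀ ≤ δ * Real.exp ((L + 1) * |s|) :=
        dist_le_mul_exp_abs_of_isIntegralCurve hi (fun _ ↦ hfield) (lt_add_one L) (by positivity)
          hδ0 hi0 hδr.le (hT s hs)
    _ ≤ δ * Real.exp ((L + 1) * T) := by gcongr; exact hT s hs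
    _ = r := hδr
    _ < ε := hrε

lemma tendstoUniformlyOn_iteratedDeriv_comp_of_isIntegralCurve {G : E → F} {n k : ℕ}
    (hV : ContDiffAt ℝ n V x₀) (hn : n ≠ 0) (hV0 : V x₀ = 0) (hG : ContDiffAt ℝ k G x₀)
    (hk : k ≤ n + 1) (hγ : ∀ᶠ i in l, IsIntegralCurve (γ i) fun _ ↦ V)
    (hγ0 : Tendsto (fun i ↦ γ i 0) l (𝓝 x₀)) (hK : Bornology.IsBounded K) :
    TendstoUniformlyOn (fun i ↦ iteratedDeriv k (G ∘ γ i)) (iteratedDeriv k fun _ ↦ G x₀) l K := by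
  have hlimit : iteratedDeriv k (fun _ ↦ G x₀) = fun _ : ℝ ↦ (derivAlong V)^[k] G x₀ :=
    funext fun s ↦ iteratedDeriv_comp_of_isIntegralCurve (γ := fun _ ↦ x₀) (s := s)
      (isIntegralCurve_const fun _ ↦ hV0) hV hG hk
  have hcurves : Tendsto ↿γ (l ×ˢ 𝓟 K) (𝓝 x₀) :=
    tendsto_prod_principal_iff.2 <| tendstoUniformlyOn_of_isIntegralCurve
      (hV.differentiableAt (by exact_mod_cast hn)) hV0 hγ hγ0 hK
  have hcont : ContinuousAt ((derivAlong V)^[k] G) x₀ :=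
    (contDiffAt_iterate_derivAlong (m := 0) hV (by simpa using hG) (by omega)).continuousAt
  rw [hlimit, ← tendsto_prod_principal_iff]
  refine (hcont.tendsto.comp hcurves).congr' ?_
  filter_upwards [hγ.prod_inl _, hcurves.eventually (hV.eventually (by simp)),
    hcurves.eventually (hG.eventually (by simp))] with ⟨i, s⟩ hi hVi hGi
  exact (iteratedDeriv_comp_of_isIntegralCurve hi hVi hGi hk).symm

end Convergence

end IntegralCurve

section HelicoidalField

variable {Φ : ℝ × ℝ × ℝ → ℝ} {A : ℝ}

/-- The vector field on `ℝ³` of the system `τ' = 1 + ν Φ(τ, ν, h)`, `ν' = -τ Φ(τ, ν, h)`, `h' = 0`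
in the unknowns `(τ, ν, h)`: the parameter `h` is treated as a constant unknown, so that the
solutions for all parameter values are integral curves of a single autonomous field. -/
def helicoidalField (Φ : ℝ × ℝ × ℝ → ℝ) (p : ℝ × ℝ × ℝ) : ℝ × ℝ × ℝ :=
  (1 + p.2.1 * Φ p, -p.1 * Φ p, 0)

lemma helicoidalField_eq_zero (hconst : 1 + A * Φ (0, A, 0) = 0) :
    helicoidalField Φ (0, A, 0) = 0 := by
  simp [helicoidalField, hconst]

lemma contDiffAt_helicoidalField {n : WithTop ℕ∞} {p : ℝ × ℝ × ℝ} (hΦ : ContDiffAt ℝ n Φ p) :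
    ContDiffAt ℝ n (helicoidalField Φ) p := by
  unfold helicoidalField
  fun_prop

lemma isIntegralCurve_helicoidalField {τ ν : ℝ → ℝ} {h : ℝ}
    (hτ : ∀ s, HasDerivAt τ (1 + ν s * Φ (τ s, ν s, h)) s)
    (hν : ∀ s, HasDerivAt ν (-(τ s) * Φ (τ s, ν s, h)) s) :
    IsIntegralCurve (fun s ↦ (τ s, ν s, h)) fun _ ↦ helicoidalField Φ :=
  fun s ↦ (hτ s).prodMk ((hν s).prodMk (hasDerivAt_const s h))

theorem tau_nu_converge_Ck_to_constant_solution_general {τ ν : ℝ → ℝ → ℝ} {n k : ℕ} {K : Set ℝ}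
    {ε : ℝ} (hΦ : ContDiffAt ℝ n Φ (0, A, 0)) (hn : n ≠ 0) (hk : k ≤ n + 1)
    (hτ : ∀ᶠ h in 𝓝[>] (0 : ℝ), ∀ s, HasDerivAt (τ h) (1 + ν h s * Φ (τ h s, ν h s, h)) s)
    (hν : ∀ᶠ h in 𝓝[>] (0 : ℝ), ∀ s, HasDerivAt (ν h) (-(τ h s) * Φ (τ h s, ν h s, h)) s)
    (hτ0 : Tendsto (fun h ↦ τ h 0) (𝓝[>] 0) (𝓝 0)) (hν0 : Tendsto (fun h ↦ ν h 0) (𝓝[>] 0) (𝓝 A))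
    (hconst : 1 + A * Φ (0, A, 0) = 0) (hK : Bornology.IsBounded K) (hε : 0 < ε) :
    ∀ᶠ h in 𝓝[>] (0 : ℝ), ∀ s ∈ K,
      |iteratedDeriv k (τ h) s - iteratedDeriv k (fun _ ↦ (0 : ℝ)) s| < ε ∧
      |iteratedDeriv k (ν h) s - iteratedDeriv k (fun _ ↦ A) s| < ε := by
  have hcurve : ∀ᶠ h in 𝓝[>] (0 : ℝ),
      IsIntegralCurve (fun s ↦ (τ h s, ν h s, h)) fun _ ↦ helicoidalField Φ := by
    filter_upwards [hτ, hν] with h using isIntegralCurve_helicoidalField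
  have hstart : Tendsto (fun h ↦ (τ h 0, ν h 0, h)) (𝓝[>] 0) (𝓝 (0, A, 0)) :=
    hτ0.prodMk_nhds (hν0.prodMk_nhds (tendsto_id.mono_left nhdsWithin_le_nhds))
  have hconverge {G : ℝ × ℝ × ℝ → ℝ} (hG : ContDiffAt ℝ k G (0, A, 0)) :=
    Metric.tendstoUniformlyOn_iff.1 (tendstoUniformlyOn_iteratedDeriv_comp_of_isIntegralCurve
      (contDiffAt_helicoidalField hΦ) hn (helicoidalField_eq_zero hconst) hG hk hcurve hstart hK)
      ε hε
  filter_upwards [hconverge contDiffAt_fst, hconverge contDiffAt_snd.fst] with h hτK hνK s hs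
  rw [← Real.dist_eq, ← Real.dist_eq, dist_comm, dist_comm (iteratedDeriv k (ν h) s)]
  exact ⟨hτK s hs, hνK s hs⟩

end HelicoidalField

/-- Theorem 4.3. Let `Φ` be smooth on `ℝ³ ∖ {0}`, `A ≠ 0`, and for each
`h ∈ (0,1]` let `(τ_h, ν_h)` solve `τ_h' = 1 + ν_h·Φ(τ_h, ν_h, h)`,
`ν_h' = −τ_h·Φ(τ_h, ν_h, h)` with `τ_h(0) = 0`, `ν_h(0) = A`; assume the constant function
`(0, A)` solves the system for `h = 0`, i.e. `1 + A·Φ(0, A, 0) = 0`. Then as `h → 0⁺`,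
`(τ_h, ν_h)` converges to the constant solution `(0, A)` in the `Cᵏ` sense, uniformly on
compact subsets of `ℝ`, for every `k`. -/
theorem tau_nu_converge_Ck_to_constant_solution
    (Φ : ℝ × ℝ × ℝ → ℝ)
    (hΦ : ContDiffOn ℝ (⊤ : ℕ∞) Φ {p : ℝ × ℝ × ℝ | p ≠ (0, 0, 0)})
    (A : ℝ) (hA : A ≠ 0)
    (τ ν : ℝ → ℝ → ℝ)
    (hτ : ∀ h ∈ Set.Ioc (0:ℝ) 1, ∀ s : ℝ,
      HasDerivAt (τ h) (1 + ν h s * Φ (τ h s, ν h s, h)) s)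
    (hν : ∀ h ∈ Set.Ioc (0:ℝ) 1, ∀ s : ℝ,
      HasDerivAt (ν h) (-(τ h s) * Φ (τ h s, ν h s, h)) s)
    (hinit : ∀ h ∈ Set.Ioc (0:ℝ) 1, τ h 0 = 0 ∧ ν h 0 = A)
    (hconst : 1 + A * Φ (0, A, 0) = 0) :
    ∀ k : ℕ, ∀ K : Set ℝ, IsCompact K → ∀ ε > 0, ∀ᶠ h in 𝓝[>] (0:ℝ), ∀ s ∈ K,
      |iteratedDeriv k (τ h) s - iteratedDeriv k (fun _ => (0:ℝ)) s| < ε ∧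
      |iteratedDeriv k (ν h) s - iteratedDeriv k (fun _ => A) s| < ε := by
  intro k K hK ε hε
  have hIoc : Set.Ioc (0 : ℝ) 1 ∈ 𝓝[>] (0 : ℝ) := Ioc_mem_nhdsGT one_pos
  have hsmooth : ContDiffAt ℝ (k + 1 : ℕ) Φ (0, A, 0) :=
    (hΦ.contDiffAt (isOpen_ne.mem_nhds (by simp [hA]))).of_le (by exact_mod_cast le_top)
  exact tau_nu_converge_Ck_to_constant_solution_general hsmooth k.succ_ne_zero (by omega)
    (eventually_of_mem hIoc hτ) (eventually_of_mem hIoc hν)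
    (tendsto_const_nhds.congr' (eventually_of_mem hIoc fun h hh ↦ (hinit h hh).1.symm))
    (tendsto_const_nhds.congr' (eventually_of_mem hIoc fun h hh ↦ (hinit h hh).2.symm))
    hconst hK.isBounded hε
end

section
/- As h → 0⁺, the curves X_h converge, uniformly together with all their derivatives on compact subsets of ℝ, to the circle s ↦ iA·e^{−is/A + iθ₀}: for each nonnegative integer k and compact interval K ⊂ ℝ, sup_{s ∈ K} |X_h^{(k)}(s) − (d^k/ds^k)(iA e^{−is/A + iθ₀})| → 0 as h → 0⁺. -/
open Filter Topology

/-!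
In the frame rotating with the limiting angular speed `Ω = Φ(0, A, 0) = -1/A`, the parameter `h` and
the phase `φ_h(s) = ∫₀ˢ Φ(τ_h, ν_h, h) - Ωs` can be adjoined to `(τ_h, ν_h)`: the resulting curve
solves an autonomous smooth system for which `((0, A, 0), 0)` is an equilibrium, and it starts at a
distance `h` from that equilibrium. A Grönwall estimate keeps it uniformly close to the equilibrium
on compact time intervals. The time derivatives of a smooth observable along a solution are its
iterated Lie derivatives evaluated on the solution, and at an equilibrium all of these of positive
order vanish. Hence `(τ_h + iν_h)e^{iφ_h}` tends to the constant `iA` with all derivatives, and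
multiplying by the fixed rotation `e^{i(θ₀ + Ωs)}` gives the convergence of `X_h`.
-/

open Function Metric Asymptotics
open scoped ContDiff

section SmoothConvergence

variable {ι X Y : Type*} {l : Filter ι}

lemma tendstoLocallyUniformly_const_iff [TopologicalSpace X] [UniformSpace Y]
    {f : ι → X → Y} {c : Y} :
    TendstoLocallyUniformly f (fun _ ↦ c) l ↔
      ∀ x, Tendsto (fun q : ι × X ↦ f q.1 q.2) (l ×ˢ 𝓝 x) (𝓝 c) := by
  simp only [tendstoLocallyUniformly_iff_forall_tendsto, nhds_eq_comap_uniformity,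
    tendsto_comap_iff, comp_def]

lemma tendstoLocallyUniformly_refl [TopologicalSpace X] [UniformSpace Y] (g : X → Y) :
    TendstoLocallyUniformly (fun _ : ι ↦ g) g l :=
  fun _ hu _ ↦ ⟨Set.univ, univ_mem, .of_forall fun _ _ _ ↦ refl_mem_uniformity hu⟩

lemma tendstoLocallyUniformly_finset_sum [TopologicalSpace X] [AddCommGroup Y] [UniformSpace Y]
    [IsUniformAddGroup Y] {κ : Type*} {t : Finset κ} {f : κ → ι → X → Y} {g : κ → X → Y}
    (h : ∀ j ∈ t, TendstoLocallyUniformly (f j) (g j) l) :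
    TendstoLocallyUniformly (fun i x ↦ ∑ j ∈ t, f j i x) (fun x ↦ ∑ j ∈ t, g j x) l := by
  classical
  induction t using Finset.induction_on with
  | empty => simpa only [Finset.sum_empty] using tendstoLocallyUniformly_refl fun _ : X ↦ (0 : Y)
  | insert j t hj ih =>
    simp only [Finset.sum_insert hj]
    exact (h j (Finset.mem_insert_self j t)).add
      (ih fun j' hj' ↦ h j' (Finset.mem_insert_of_mem hj'))

variable {𝕜 F 𝔸 : Type*} [NontriviallyNormedField 𝕜] [NormedAddCommGroup F] [NormedSpace 𝕜 F]
  [NormedRing 𝔸] [NormedAlgebra 𝕜 𝔸]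

/-- Convergence in the `C^∞` topology: locally uniform convergence of all derivatives. The functions
themselves are required to be smooth, as `iteratedDeriv` takes junk values otherwise. -/
structure TendstoSmoothly (f : ι → 𝕜 → F) (g : 𝕜 → F) (l : Filter ι) : Prop where
  eventually_contDiff : ∀ᶠ i in l, ContDiff 𝕜 ∞ (f i)
  contDiff : ContDiff 𝕜 ∞ g
  tendstoLocallyUniformly_iteratedDeriv (k : ℕ) :
    TendstoLocallyUniformly (fun i ↦ iteratedDeriv k (f i)) (iteratedDeriv k g) l

namespace TendstoSmoothly

lemma refl {g : 𝕜 → F} (hg : ContDiff 𝕜 ∞ g) : TendstoSmoothly (fun _ : ι ↦ g) g l :=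
  ⟨.of_forall fun _ ↦ hg, hg, fun _ ↦ tendstoLocallyUniformly_refl _⟩

lemma congr {f f' : ι → 𝕜 → F} {g : 𝕜 → F} (h : TendstoSmoothly f g l)
    (hf : ∀ᶠ i in l, f i = f' i) : TendstoSmoothly f' g l where
  eventually_contDiff := by
    filter_upwards [h.eventually_contDiff, hf] with i hi heq using heq ▸ hi
  contDiff := h.contDiff
  tendstoLocallyUniformly_iteratedDeriv k :=
    (h.tendstoLocallyUniformly_iteratedDeriv k).congr_inseparable <|
      hf.mono fun _ heq _ ↦ heq ▸ .rfl

lemma mul {f₁ f₂ : ι → 𝕜 → 𝔸} {g₁ g₂ : 𝕜 → 𝔸} (h₁ : TendstoSmoothly f₁ g₁ l)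
    (h₂ : TendstoSmoothly f₂ g₂ l) :
    TendstoSmoothly (fun i x ↦ f₁ i x * f₂ i x) (fun x ↦ g₁ x * g₂ x) l where
  eventually_contDiff := by
    filter_upwards [h₁.eventually_contDiff, h₂.eventually_contDiff] with i hi₁ hi₂ using hi₁.mul hi₂
  contDiff := h₁.contDiff.mul h₂.contDiff
  tendstoLocallyUniformly_iteratedDeriv k := by
    have leibniz {u v : 𝕜 → 𝔸} (hu : ContDiff 𝕜 ∞ u) (hv : ContDiff 𝕜 ∞ v) (x : 𝕜) :
        iteratedDeriv k (fun x ↦ u x * v x) x = ∑ j ∈ Finset.range (k + 1),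
          k.choose j * iteratedDeriv j u x * iteratedDeriv (k - j) v x :=
      iteratedDeriv_fun_mul (hu.contDiffAt.of_le (mod_cast le_top))
        (hv.contDiffAt.of_le (mod_cast le_top))
    have continuous_lim {g : 𝕜 → 𝔸} (hg : ContDiff 𝕜 ∞ g) (j : ℕ) :
        Continuous (iteratedDeriv j g) :=
      hg.continuous_iteratedDeriv j (mod_cast le_top)
    rw [funext (leibniz h₁.contDiff h₂.contDiff)]
    refine (tendstoLocallyUniformly_finset_sum fun j _ ↦
      (((tendstoLocallyUniformly_refl fun _ ↦ ((k.choose j : ℕ) : 𝔸)).fun_mul₀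
        (h₁.tendstoLocallyUniformly_iteratedDeriv j) continuous_const
        (continuous_lim h₁.contDiff j)).fun_mul₀ (h₂.tendstoLocallyUniformly_iteratedDeriv (k - j))
        (continuous_const.mul (continuous_lim h₁.contDiff j))
        (continuous_lim h₂.contDiff (k - j)))).congr_inseparable ?_
    filter_upwards [h₁.eventually_contDiff, h₂.eventually_contDiff] with i hi₁ hi₂ x
    exact .of_eq (leibniz hi₁ hi₂ x).symm

lemma eventually_norm_iteratedDeriv_sub_lt {f : ι → 𝕜 → F} {g : 𝕜 → F}
    (h : TendstoSmoothly f g l) (k : ℕ) {K : Set 𝕜} (hK : IsCompact K) {ε : ℝ} (hε : 0 < ε) :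
    ∀ᶠ i in l, ∀ x ∈ K, ‖iteratedDeriv k (f i) x - iteratedDeriv k g x‖ < ε := by
  have hunif := (tendstoLocallyUniformlyOn_iff_tendstoUniformlyOn_of_compact hK).1
    (h.tendstoLocallyUniformly_iteratedDeriv k).tendstoLocallyUniformlyOn
  filter_upwards [tendstoUniformlyOn_iff.1 hunif ε hε] with i hi x hx
  rw [← dist_eq_norm, dist_comm]
  exact hi x hx

end TendstoSmoothly

end SmoothConvergence

section Equilibrium

variable {ι E : Type*} [NormedAddCommGroup E] [NormedSpace ℝ E] {V : E → E} {p₀ : E} {L r δ : ℝ}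

lemma norm_integralCurve_sub_le_of_nonneg {γ : ℝ → E} (hγ : IsIntegralCurve γ fun _ ↦ V)
    (hL : 0 ≤ L) (hV : ∀ p ∈ closedBall p₀ r, ‖V p‖ ≤ L * ‖p - p₀‖) (hδ : 0 < δ)
    (hγ₀ : ‖γ 0 - p₀‖ ≤ δ) {S s : ℝ} (hr : δ * Real.exp ((L + 1) * S) ≤ r) (hs : s ∈ Set.Icc 0 S) :
    ‖γ s - p₀‖ ≤ δ * Real.exp ((L + 1) * s) := by
  have hderiv (t : ℝ) : HasDerivAt (fun u ↦ γ u - p₀) (V (γ t)) t := (hγ t).sub_const p₀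
  have hbarrier (t : ℝ) : HasDerivAt (fun u ↦ δ * Real.exp ((L + 1) * u))
      ((L + 1) * (δ * Real.exp ((L + 1) * t))) t :=
    ((hasDerivAt_const_mul (L + 1)).exp.const_mul δ).congr_deriv (by ring)
  -- The fence needs the bound on `V` only at points of contact, and there the rate `L + 1 > L`
  -- makes it strict; so there is no need to know beforehand that `γ` stays in the ball.
  refine image_norm_le_of_norm_deriv_right_lt_deriv_boundary
    (fun t _ ↦ (hderiv t).continuousAt.continuousWithinAt)
    (fun t _ ↦ (hderiv t).hasDerivWithinAt) (by simpa using hγ₀) hbarrier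
    (fun t ht hcontact ↦ ?_) hs
  have hball : γ t ∈ closedBall p₀ r := by
    rw [mem_closedBall, dist_eq_norm, hcontact]
    refine le_trans ?_ hr
    gcongr
    exact ht.2.le
  calc ‖V (γ t)‖ ≤ L * (δ * Real.exp ((L + 1) * t)) := hcontact ▸ hV _ hball
    _ < (L + 1) * (δ * Real.exp ((L + 1) * t)) := by gcongr; exact lt_add_one L

lemma norm_integralCurve_sub_le {γ : ℝ → E} (hγ : IsIntegralCurve γ fun _ ↦ V)
    (hL : 0 ≤ L) (hV : ∀ p ∈ closedBall p₀ r, ‖V p‖ ≤ L * ‖p - p₀‖) (hδ : 0 < δ)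
    (hγ₀ : ‖γ 0 - p₀‖ ≤ δ) {S s : ℝ} (hr : δ * Real.exp ((L + 1) * S) ≤ r) (hs : |s| ≤ S) :
    ‖γ s - p₀‖ ≤ δ * Real.exp ((L + 1) * |s|) := by
  rcases le_total 0 s with hs₀ | hs₀
  · rw [abs_of_nonneg hs₀] at hs ⊢
    exact norm_integralCurve_sub_le_of_nonneg hγ hL hV hδ hγ₀ hr ⟨hs₀, hs⟩
  · rw [abs_of_nonpos hs₀] at hs ⊢
    have hreversed : IsIntegralCurve (γ ∘ (· * (-1))) fun _ ↦ (-1 : ℝ) • V :=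
      hγ.comp_mul (-1)
    simpa using norm_integralCurve_sub_le_of_nonneg hreversed hL (by simpa using hV) hδ
      (by simpa using hγ₀) hr ⟨neg_nonneg.2 hs₀, hs⟩

theorem tendstoLocallyUniformly_integralCurve_of_isBigO {γ : ι → ℝ → E} {l : Filter ι}
    (hV : V =O[𝓝 p₀] (· - p₀)) (hγ : ∀ᶠ i in l, IsIntegralCurve (γ i) fun _ ↦ V)
    (hγ₀ : Tendsto (fun i ↦ γ i 0) l (𝓝 p₀)) :
    TendstoLocallyUniformly γ (fun _ ↦ p₀) l := by
  obtain ⟨L, hL, hbound⟩ := hV.exists_pos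
  obtain ⟨r, hr, hball⟩ := nhds_basis_closedBall.eventually_iff.1 hbound.bound
  refine tendstoLocallyUniformly_const_iff.2 fun s₀ ↦ nhds_basis_closedBall.tendsto_right_iff.2
    fun ε hε ↦ ?_
  set S := |s₀| + 1
  set ρ := min r ε
  set δ := ρ * Real.exp (-((L + 1) * S)) with hδ_def
  have hδ : 0 < δ := mul_pos (lt_min hr hε) (Real.exp_pos _)
  have hδS : δ * Real.exp ((L + 1) * S) = ρ := by
    rw [hδ_def, mul_assoc, ← Real.exp_add, neg_add_cancel, Real.exp_zero, mul_one]
  have hnear : ∀ᶠ s in 𝓝 s₀, |s| ≤ S :=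
    (continuous_abs.tendsto s₀).eventually_le_const (lt_add_one |s₀|)
  filter_upwards [(hγ.and (hγ₀ (closedBall_mem_nhds p₀ hδ))).prod_mk hnear]
  rintro ⟨i, s⟩ ⟨⟨hcurve, hstart⟩, hs⟩
  rw [mem_closedBall, dist_eq_norm]
  calc ‖γ i s - p₀‖ ≤ δ * Real.exp ((L + 1) * |s|) :=
        norm_integralCurve_sub_le hcurve hL.le (fun p hp ↦ hball hp) hδ
          (mem_closedBall_iff_norm.1 hstart) (hδS.trans_le (min_le_left r ε)) hs
    _ ≤ δ * Real.exp ((L + 1) * S) := by gcongr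
    _ ≤ ε := hδS.trans_le (min_le_right r ε)

end Equilibrium

section LieDerivative

variable {ι E F : Type*} [NormedAddCommGroup E] [NormedSpace ℝ E] [NormedAddCommGroup F]
  [NormedSpace ℝ F] {V : E → E} {f : E → F} {U : Set E} {p₀ : E}

/-- The Lie derivative of a function `f` along a vector field `V`, i.e. the rate of change of `f`
along the integral curves of `V`. -/
noncomputable def lieDerivative (V : E → E) (f : E → F) (p : E) : F :=
  fderiv ℝ f p (V p)

lemma contDiffOn_iterate_lieDerivative (hU : IsOpen U) (hV : ContDiffOn ℝ ∞ V U)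
    (hf : ContDiffOn ℝ ∞ f U) (k : ℕ) : ContDiffOn ℝ ∞ ((lieDerivative V)^[k] f) U := by
  induction k with
  | zero => exact hf
  | succ k ih =>
    rw [iterate_succ_apply']
    exact (ih.fderiv_of_isOpen hU (by simp)).clm_apply hV

lemma iterate_succ_lieDerivative_eq_zero (hV : V p₀ = 0) (k : ℕ) :
    (lieDerivative V)^[k + 1] f p₀ = 0 := by
  rw [iterate_succ_apply', lieDerivative, hV, map_zero]

lemma hasDerivAt_comp_integralCurve {γ : ℝ → E} (hγ : IsIntegralCurve γ fun _ ↦ V) {s : ℝ}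
    (hf : DifferentiableAt ℝ f (γ s)) : HasDerivAt (f ∘ γ) (lieDerivative V f (γ s)) s :=
  hf.hasFDerivAt.comp_hasDerivAt s (hγ s)

lemma hasDerivAt_iterate_lieDerivative_comp_integralCurve (hU : IsOpen U)
    (hV : ContDiffOn ℝ ∞ V U) (hf : ContDiffOn ℝ ∞ f U) {γ : ℝ → E}
    (hγ : IsIntegralCurve γ fun _ ↦ V) {s : ℝ} (hγU : γ s ∈ U) (k : ℕ) :
    HasDerivAt ((lieDerivative V)^[k] f ∘ γ) ((lieDerivative V)^[k + 1] f (γ s)) s := by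
  rw [iterate_succ_apply']
  exact hasDerivAt_comp_integralCurve hγ <|
    ((contDiffOn_iterate_lieDerivative hU hV hf k).contDiffAt (hU.mem_nhds hγU)).differentiableAt
      (by simp)

lemma iteratedDeriv_comp_integralCurve (hU : IsOpen U) (hV : ContDiffOn ℝ ∞ V U)
    (hf : ContDiffOn ℝ ∞ f U) {γ : ℝ → E} (hγ : IsIntegralCurve γ fun _ ↦ V)
    (hγU : ∀ s, γ s ∈ U) (k : ℕ) :
    iteratedDeriv k (f ∘ γ) = (lieDerivative V)^[k] f ∘ γ := by
  induction k with
  | zero => exact iteratedDeriv_zero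
  | succ k ih =>
    rw [iteratedDeriv_succ, ih]
    exact deriv_eq fun s ↦
      hasDerivAt_iterate_lieDerivative_comp_integralCurve hU hV hf hγ (hγU s) k

lemma contDiff_comp_integralCurve (hU : IsOpen U) (hV : ContDiffOn ℝ ∞ V U)
    (hf : ContDiffOn ℝ ∞ f U) {γ : ℝ → E} (hγ : IsIntegralCurve γ fun _ ↦ V)
    (hγU : ∀ s, γ s ∈ U) : ContDiff ℝ ∞ (f ∘ γ) := by
  refine contDiff_of_differentiable_iteratedDeriv fun k _ s ↦ ?_
  rw [iteratedDeriv_comp_integralCurve hU hV hf hγ hγU]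
  exact (hasDerivAt_iterate_lieDerivative_comp_integralCurve hU hV hf hγ (hγU s) k).differentiableAt

theorem tendstoSmoothly_comp_integralCurve (hU : IsOpen U) (hV : ContDiffOn ℝ ∞ V U)
    (hf : ContDiffOn ℝ ∞ f U) (hp₀ : p₀ ∈ U) (hVp₀ : V p₀ = 0) {γ : ι → ℝ → E} {l : Filter ι}
    (hγ : ∀ᶠ i in l, IsIntegralCurve (γ i) fun _ ↦ V) (hγU : ∀ᶠ i in l, ∀ s, γ i s ∈ U)
    (hγ₀ : Tendsto (fun i ↦ γ i 0) l (𝓝 p₀)) :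
    TendstoSmoothly (fun i ↦ f ∘ γ i) (fun _ ↦ f p₀) l where
  eventually_contDiff := by
    filter_upwards [hγ, hγU] with i hi hiU using contDiff_comp_integralCurve hU hV hf hi hiU
  contDiff := contDiff_const
  tendstoLocallyUniformly_iteratedDeriv k := by
    have hlinear : V =O[𝓝 p₀] (· - p₀) := by
      simpa only [hVp₀, sub_zero] using
        ((hV.contDiffAt (hU.mem_nhds hp₀)).differentiableAt (by simp)).isBigO_sub
    have hγlim := tendstoLocallyUniformly_integralCurve_of_isBigO hlinear hγ hγ₀
    have hlieDeriv : ContinuousAt ((lieDerivative V)^[k] f) p₀ :=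
      (contDiffOn_iterate_lieDerivative hU hV hf k).continuousOn.continuousAt (hU.mem_nhds hp₀)
    have hvalue : iteratedDeriv k (fun _ : ℝ ↦ f p₀) = fun _ ↦ (lieDerivative V)^[k] f p₀ := by
      funext s
      cases k with
      | zero => rw [iteratedDeriv_zero, iterate_zero_apply]
      | succ k =>
        rw [iteratedDeriv_const, if_neg k.succ_ne_zero, iterate_succ_lieDerivative_eq_zero hVp₀]
    have hlim : TendstoLocallyUniformly (fun i ↦ (lieDerivative V)^[k] f ∘ γ i)
        (fun _ ↦ (lieDerivative V)^[k] f p₀) l :=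
      tendstoLocallyUniformly_const_iff.2 fun s ↦
        hlieDeriv.tendsto.comp (tendstoLocallyUniformly_const_iff.1 hγlim s)
    rw [hvalue]
    refine hlim.congr_inseparable ?_
    filter_upwards [hγ, hγU] with i hi hiU s
    rw [iteratedDeriv_comp_integralCurve hU hV hf hi hiU]

end LieDerivative

section CorotatingFrame

variable {Φ : ℝ × ℝ × ℝ → ℝ} {U : Set (ℝ × ℝ × ℝ)} {Ω : ℝ}

/-- The autonomous system for `((τ, ν, h), φ)`, with `h` a constant parameter and `φ` the phase of
the tangent relative to a frame rotating at angular speed `Ω`. -/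
def corotatingField (Φ : ℝ × ℝ × ℝ → ℝ) (Ω : ℝ) (q : (ℝ × ℝ × ℝ) × ℝ) : (ℝ × ℝ × ℝ) × ℝ :=
  ((1 + q.1.2.1 * Φ q.1, -q.1.1 * Φ q.1, 0), Φ q.1 - Ω)

/-- The solution `s ↦ ((τ s, ν s, h), φ s)` of the corotating system built from a solution `(τ, ν)`
of the system with parameter `h`. -/
noncomputable def corotatingState (Φ : ℝ × ℝ × ℝ → ℝ) (Ω : ℝ) (τ ν : ℝ → ℝ) (h s : ℝ) :
    (ℝ × ℝ × ℝ) × ℝ :=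
  ((τ s, ν s, h), (∫ t in (0 : ℝ)..s, Φ (τ t, ν t, h)) - Ω * s)

/-- The point `(τ + iν)e^{iφ}` of the plane, in the rotating frame. -/
noncomputable def corotatingPosition (q : (ℝ × ℝ × ℝ) × ℝ) : ℂ :=
  (q.1.1 + q.1.2.1 * Complex.I) * Complex.exp (Complex.I * q.2)

lemma contDiff_corotatingPosition : ContDiff ℝ ∞ corotatingPosition := by
  have hofReal : ContDiff ℝ ∞ ((↑) : ℝ → ℂ) := Complex.ofRealCLM.contDiff
  unfold corotatingPosition
  fun_prop

lemma contDiffOn_corotatingField (hΦ : ContDiffOn ℝ ∞ Φ U) (Ω : ℝ) :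
    ContDiffOn ℝ ∞ (corotatingField Φ Ω) (Prod.fst ⁻¹' U) := by
  have hΦfst : ContDiffOn ℝ ∞ (fun q : (ℝ × ℝ × ℝ) × ℝ ↦ Φ q.1) (Prod.fst ⁻¹' U) :=
    hΦ.comp contDiff_fst.contDiffOn (Set.mapsTo_preimage _ _)
  have hτ : ContDiff ℝ ∞ fun q : (ℝ × ℝ × ℝ) × ℝ ↦ q.1.1 := by fun_prop
  have hν : ContDiff ℝ ∞ fun q : (ℝ × ℝ × ℝ) × ℝ ↦ q.1.2.1 := by fun_prop
  exact ((contDiffOn_const.add (hν.contDiffOn.mul hΦfst)).prodMk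
    ((hτ.neg.contDiffOn.mul hΦfst).prodMk contDiffOn_const)).prodMk (hΦfst.sub contDiffOn_const)

lemma corotatingField_eq_zero {A : ℝ} (hA : 1 + A * Φ (0, A, 0) = 0) (φ : ℝ) :
    corotatingField Φ (Φ (0, A, 0)) ((0, A, 0), φ) = 0 := by
  simp [corotatingField, hA]

lemma isIntegralCurve_corotatingState (hΦ : ContinuousOn Φ U) {τ ν : ℝ → ℝ} {h : ℝ}
    (hmem : ∀ s, (τ s, ν s, h) ∈ U)
    (hτ : ∀ s, HasDerivAt τ (1 + ν s * Φ (τ s, ν s, h)) s)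
    (hν : ∀ s, HasDerivAt ν (-τ s * Φ (τ s, ν s, h)) s) (Ω : ℝ) :
    IsIntegralCurve (corotatingState Φ Ω τ ν h) fun _ ↦ corotatingField Φ Ω := by
  have hτcont : Continuous τ := continuous_iff_continuousAt.2 fun s ↦ (hτ s).continuousAt
  have hνcont : Continuous ν := continuous_iff_continuousAt.2 fun s ↦ (hν s).continuousAt
  have hcurvature : Continuous fun t ↦ Φ (τ t, ν t, h) :=
    hΦ.comp_continuous (f := fun t ↦ (τ t, ν t, h)) (by fun_prop) hmem
  intro s
  exact ((hτ s).prodMk ((hν s).prodMk (hasDerivAt_const s h))).prodMk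
    ((hcurvature.integral_hasStrictDerivAt 0 s).hasDerivAt.sub (hasDerivAt_const_mul Ω))

lemma corotatingPosition_corotatingState_mul_exp (τ ν : ℝ → ℝ) (h s θ₀ : ℝ) :
    corotatingPosition (corotatingState Φ Ω τ ν h s) * Complex.exp (Complex.I * (θ₀ + Ω * s)) =
      (τ s + ν s * Complex.I) *
        Complex.exp (Complex.I * (θ₀ + (∫ t in (0 : ℝ)..s, Φ (τ t, ν t, h) : ℝ))) := by
  simp only [corotatingPosition, corotatingState, Complex.ofReal_sub, Complex.ofReal_mul]
  rw [mul_assoc, ← Complex.exp_add]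
  ring_nf

theorem tendstoSmoothly_corotatingPosition_corotatingState (hU : IsOpen U)
    (hΦ : ContDiffOn ℝ ∞ Φ U) {A : ℝ} (hAU : (0, A, 0) ∈ U) (hA : 1 + A * Φ (0, A, 0) = 0)
    {τ ν : ℝ → ℝ → ℝ} {l : Filter ℝ} (hl : l ≤ 𝓝 0)
    (hmem : ∀ᶠ h in l, ∀ s, (τ h s, ν h s, h) ∈ U)
    (hτ : ∀ᶠ h in l, ∀ s, HasDerivAt (τ h) (1 + ν h s * Φ (τ h s, ν h s, h)) s)
    (hν : ∀ᶠ h in l, ∀ s, HasDerivAt (ν h) (-τ h s * Φ (τ h s, ν h s, h)) s)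
    (hτ₀ : Tendsto (τ · 0) l (𝓝 0)) (hν₀ : Tendsto (ν · 0) l (𝓝 A)) :
    TendstoSmoothly
      (fun h ↦ corotatingPosition ∘ corotatingState Φ (Φ (0, A, 0)) (τ h) (ν h) h)
      (fun _ ↦ Complex.I * A) l := by
  have hcurve : ∀ᶠ h in l, IsIntegralCurve (corotatingState Φ (Φ (0, A, 0)) (τ h) (ν h) h)
      fun _ ↦ corotatingField Φ (Φ (0, A, 0)) := by
    filter_upwards [hmem, hτ, hν] with h hmem hτ hν
    exact isIntegralCurve_corotatingState hΦ.continuousOn hmem hτ hν _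
  have hstart : Tendsto (fun h ↦ corotatingState Φ (Φ (0, A, 0)) (τ h) (ν h) h 0) l
      (𝓝 ((0, A, 0), 0)) := by
    simp only [corotatingState, intervalIntegral.integral_same, mul_zero, sub_zero]
    exact (hτ₀.prodMk_nhds (hν₀.prodMk_nhds (tendsto_id'.2 hl))).prodMk_nhds tendsto_const_nhds
  have hlimit : corotatingPosition ((0, A, 0), 0) = Complex.I * A := by
    simp [corotatingPosition, mul_comm]
  rw [← hlimit]
  exact tendstoSmoothly_comp_integralCurve (hU.preimage continuous_fst)
    (contDiffOn_corotatingField hΦ _) contDiff_corotatingPosition.contDiffOn hAU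
    (corotatingField_eq_zero hA 0) hcurve hmem hstart

theorem generating_curves_converge_to_circle_general (hU : IsOpen U)
    (hΦ : ContDiffOn ℝ ∞ Φ U) {A : ℝ} (hAU : (0, A, 0) ∈ U) (hA : 1 + A * Φ (0, A, 0) = 0) (θ₀ : ℝ)
    {τ ν : ℝ → ℝ → ℝ} {l : Filter ℝ} (hl : l ≤ 𝓝 0)
    (hmem : ∀ᶠ h in l, ∀ s, (τ h s, ν h s, h) ∈ U)
    (hτ : ∀ᶠ h in l, ∀ s, HasDerivAt (τ h) (1 + ν h s * Φ (τ h s, ν h s, h)) s)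
    (hν : ∀ᶠ h in l, ∀ s, HasDerivAt (ν h) (-τ h s * Φ (τ h s, ν h s, h)) s)
    (hτ₀ : Tendsto (τ · 0) l (𝓝 0)) (hν₀ : Tendsto (ν · 0) l (𝓝 A)) {X : ℝ → ℝ → ℂ}
    (hX : ∀ᶠ h in l, ∀ s, X h s = (τ h s + ν h s * Complex.I) *
      Complex.exp (Complex.I * (θ₀ + (∫ t in (0 : ℝ)..s, Φ (τ h t, ν h t, h) : ℝ)))) :
    TendstoSmoothly X
      (fun t ↦ Complex.I * A * Complex.exp (-Complex.I * t / A + Complex.I * θ₀)) l := by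
  have hrotating := tendstoSmoothly_corotatingPosition_corotatingState hU hΦ hAU hA hl hmem hτ hν
    hτ₀ hν₀
  have hframe : ContDiff ℝ ∞ fun t : ℝ ↦
      Complex.exp (-Complex.I * t / A + Complex.I * θ₀) := by
    have hofReal : ContDiff ℝ ∞ ((↑) : ℝ → ℂ) := Complex.ofRealCLM.contDiff
    fun_prop
  have hspeed : -Complex.I / A = Complex.I * Φ (0, A, 0) := by
    have hA₀ : (A : ℂ) ≠ 0 := Complex.ofReal_ne_zero.2 fun hA₀ ↦ by simp [hA₀] at hA
    have hAΦ : 1 + (A : ℂ) * Φ (0, A, 0) = 0 := mod_cast hA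
    rw [div_eq_iff hA₀]
    linear_combination -Complex.I * hAΦ
  refine (hrotating.mul (.refl hframe)).congr (hX.mono fun h hXh ↦ funext fun s ↦ ?_)
  have hphase : -Complex.I * s / A + Complex.I * θ₀ = Complex.I * (θ₀ + Φ (0, A, 0) * s) := by
    rw [mul_div_right_comm, hspeed]
    ring
  rw [hXh, hphase, comp_apply, corotatingPosition_corotatingState_mul_exp]

end CorotatingFrame

/-- Corollary of Theorem 4.3. With the generating curves
`X_h(s) = (τ_h(s) + iν_h(s))·e^{iθ_h(s)}`, `θ_h(s) = θ₀ + ∫₀ˢ Φ(τ_h, ν_h, h)`, as `h → 0⁺`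
the curves `X_h` converge, uniformly with all derivatives on compact subsets of `ℝ`, to the
circle `s ↦ iA·e^{−is/A + iθ₀}`. -/
theorem generating_curves_converge_to_circle
    (Φ : ℝ × ℝ × ℝ → ℝ)
    (hΦ : ContDiffOn ℝ (⊤ : ℕ∞) Φ {p : ℝ × ℝ × ℝ | p ≠ (0, 0, 0)})
    (A : ℝ) (hA : A ≠ 0) (θ₀ : ℝ)
    (τ ν : ℝ → ℝ → ℝ)
    (hτ : ∀ h ∈ Set.Ioc (0:ℝ) 1, ∀ s : ℝ,
      HasDerivAt (τ h) (1 + ν h s * Φ (τ h s, ν h s, h)) s)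
    (hν : ∀ h ∈ Set.Ioc (0:ℝ) 1, ∀ s : ℝ,
      HasDerivAt (ν h) (-(τ h s) * Φ (τ h s, ν h s, h)) s)
    (hinit : ∀ h ∈ Set.Ioc (0:ℝ) 1, τ h 0 = 0 ∧ ν h 0 = A)
    (hconst : 1 + A * Φ (0, A, 0) = 0)
    (X : ℝ → ℝ → ℂ)
    (hX : ∀ h ∈ Set.Ioc (0:ℝ) 1, ∀ s : ℝ,
      X h s = ((τ h s : ℂ) + (ν h s : ℂ) * Complex.I) *
        Complex.exp (Complex.I * ((θ₀ : ℂ) + ((∫ t in (0:ℝ)..s, Φ (τ h t, ν h t, h)) : ℝ)))) :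
    ∀ k : ℕ, ∀ K : Set ℝ, IsCompact K → ∀ ε > 0, ∀ᶠ h in 𝓝[>] (0:ℝ), ∀ s ∈ K,
      ‖iteratedDeriv k (X h) s -
        iteratedDeriv k (fun t : ℝ =>
          Complex.I * (A : ℂ) * Complex.exp (-Complex.I * (t : ℂ) / (A : ℂ)
            + Complex.I * (θ₀ : ℂ))) s‖ < ε := by
  intro k K hK ε hε
  have hIoc : ∀ᶠ h in 𝓝[>] (0 : ℝ), h ∈ Set.Ioc (0 : ℝ) 1 := Ioc_mem_nhdsGT one_pos
  exact (generating_curves_converge_to_circle_general isOpen_ne hΦ (by simp [hA]) hconst θ₀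
    nhdsWithin_le_nhds (hIoc.mono fun h hh s ↦ by simp [hh.1.ne']) (hIoc.mono hτ) (hIoc.mono hν)
    (tendsto_const_nhds.congr' (hIoc.mono fun h hh ↦ (hinit h hh).1.symm))
    (tendsto_const_nhds.congr' (hIoc.mono fun h hh ↦ (hinit h hh).2.symm))
    (hIoc.mono hX)).eventually_norm_iteratedDeriv_sub_lt k hK hε
end
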